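/- arXiv:2207.14210 — 8 statements merged into one kernel-verified Lean document; each statement's English description precedes it below -/
import Mathlib

section
/- Let A be a finite set of positive integers of size n whose elements have greatest common divisor 1, and suppose A ≠ {1, 2}. Then A contains a sum-free subset B with 3·|B| ≥ n + 2. -/
/-!
For a rational `X`, the elements `a` of `A` with `⌊a X⌋ ≡ 1 (mod 3)` form a sum-free set: they are
those for which `a (X / 3)` lies in the sum-free part `[1/3, 2/3)` of the circle `ℝ / ℤ`. Writing
`N(A, X)` for their number, we show by induction that every nonempty `A` has some `X` with
`3 N(A, X) ≥ |A| + 2`, except when `A = {t, 2t}` (`exists_dilation`).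

Split `A` into the part `A'` prime to `3` and the multiples of `3`, written `3 C`. The key identity
is `N(A', X) + N(A', X + 1) + N(A', X + 2) = |A'|`, whereas `N(C, 3 X)` does not change under
`X ↦ X + 1`.
* If `C` is empty, then `N(A, 0) = 0`, so `N(A, 1)` or `N(A, 2)` is at least `|A| / 2`, which
  suffices unless `|A| = 2`; pairs are handled by hand (`exists_dilation_pair`).
* If `C` has a good dilation `3 X`, one of the three shifts of `X` is good for `A`.
* Otherwise `C = {t, 2t}`, and `N(C, 3 X) = 1` whenever `t X` is at distance more than `1/6` from
  the integers. If `A` has no good dilation, the identity forces `3 N(A', X) = |A'|` for all such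
  `X`. But `N(A', ·)` jumps at `p / M`, where `M = max A'`, `p` is coprime to `M` and
  `p ≡ 1 (mod 3)`: among the elements of `A'`, only `M` changes its contribution there. The number
  `p` can be chosen with `t p / M` at distance more than `1/6` from the integers
  (`exists_multiplier`) unless `M ∣ t`; and `M ≤ t` is impossible because `N(A', 1 / (6 t))` would
  then vanish. So `A'` is empty and `A = {3t, 6t}`.
-/

/-- A set of positive integers is sum-free if there are no `x, y, z` in it
with `x + y = z` (where `x = y` is allowed). -/
def SumFree (B : Finset ℕ) : Prop := ∀ x ∈ B, ∀ y ∈ B, ∀ z ∈ B, x + y ≠ z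

/-! ### Sum-free sets from dilations -/

/-- The elements `a` of `A` with `⌊a X⌋ ≡ 1 (mod 3)`, that is, with `a (X / 3)` in `[1/3, 2/3)`
modulo `1`. -/
def dil (A : Finset ℕ) (X : ℚ) : Finset ℕ := A.filter fun a => ⌊(a : ℚ) * X⌋ % 3 = 1

theorem sumFree_dil (A : Finset ℕ) (X : ℚ) : SumFree (dil A X) := by
  intro x hx y hy z hz h
  simp only [dil, Finset.mem_filter] at hx hy hz
  have h1 := Int.le_floor_add ((x : ℚ) * X) (y * X)
  have h2 := Int.le_floor_add_floor ((x : ℚ) * X) (y * X)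
  have h3 : (x : ℚ) * X + y * X = z * X := by rw [← h]; push_cast; ring
  rw [h3] at h1 h2
  omega

theorem card_dil (A : Finset ℕ) (X : ℚ) :
    (dil A X).card = ∑ a ∈ A, if ⌊(a : ℚ) * X⌋ % 3 = 1 then 1 else 0 := by
  rw [dil, Finset.card_filter]

/-- For `3 ∤ a`, exactly one of `X`, `X + 1`, `X + 2` selects `a`. -/
theorem card_dil_shift (A : Finset ℕ) (hA : ∀ a ∈ A, ¬ 3 ∣ a) (X : ℚ) :
    (dil A X).card + (dil A (X + 1)).card + (dil A (X + 2)).card = A.card := by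
  rw [card_dil, card_dil, card_dil, ← Finset.sum_add_distrib, ← Finset.sum_add_distrib,
    Finset.card_eq_sum_ones]
  refine Finset.sum_congr rfl fun a ha => ?_
  have h1 : ⌊(a : ℚ) * (X + 1)⌋ = ⌊(a : ℚ) * X⌋ + a := by
    rw [← Int.floor_add_intCast]; push_cast; congr 1; ring
  have h2 : ⌊(a : ℚ) * (X + 2)⌋ = ⌊(a : ℚ) * X⌋ + (2 * a : ℤ) := by
    rw [← Int.floor_add_intCast]; push_cast; congr 1; ring
  have := hA a ha
  rw [h1, h2]
  split_ifs <;> omega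

theorem card_dil_three (C : Finset ℕ) (X : ℚ) (k : ℤ) :
    (dil C (3 * (X + k))).card = (dil C (3 * X)).card := by
  rw [card_dil, card_dil]
  refine Finset.sum_congr rfl fun a _ => ?_
  have h1 : ⌊(a : ℚ) * (3 * (X + k))⌋ = ⌊(a : ℚ) * (3 * X)⌋ + 3 * (a * k : ℤ) := by
    rw [← Int.floor_add_intCast]; push_cast; congr 1; ring
  rw [h1, Int.add_mul_emod_self_left]

/-! ### Pairs -/

theorem exists_dilation_pair {a b : ℕ} (ha : 0 < a) (hab : a < b) (hb : b ≠ 2 * a) :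
    ∃ X : ℚ, ⌊(a : ℚ) * X⌋ % 3 = 1 ∧ ⌊(b : ℚ) * X⌋ % 3 = 1 := by
  have ha' : (0 : ℚ) < a := by exact_mod_cast ha
  have hb' : (0 : ℚ) < b := by exact_mod_cast ha.trans hab
  rcases lt_or_gt_of_ne hb with h | h
  · refine ⟨1 / a, ?_, ?_⟩
    · rw [mul_one_div_cancel ha'.ne']; simp
    · have : ⌊(b : ℚ) * (1 / a)⌋ = 1 := by
        rw [Int.floor_eq_iff, mul_one_div]
        constructor
        · rw [le_div_iff₀ ha']; push_cast; rw [one_mul]; exact_mod_cast hab.le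
        · rw [div_lt_iff₀ ha']; push_cast; norm_num; exact_mod_cast h
      rw [this]; rfl
  · -- The intervals for `b` have gaps shorter than the first interval for `a`: take the first left
    -- endpoint of an interval for `b` that is not to the left of it.
    have hex : ∃ j : ℕ, b ≤ (1 + 3 * j) * a := ⟨b, by nlinarith⟩
    obtain ⟨j, hj, hmin⟩ : ∃ j : ℕ, b ≤ (1 + 3 * j) * a ∧ ∀ i < j, (1 + 3 * i) * a < b :=
      ⟨Nat.find hex, Nat.find_spec hex, fun i hi => not_le.1 (Nat.find_min hex hi)⟩
    have hlt : (1 + 3 * j) * a < 2 * b := by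
      rcases j with _ | _ | j
      · omega
      · omega
      · have := hmin (j + 1) (by omega)
        nlinarith
    refine ⟨(1 + 3 * j : ℕ) / b, ?_, ?_⟩
    · have : ⌊(a : ℚ) * ((1 + 3 * j : ℕ) / b)⌋ = 1 := by
        rw [Int.floor_eq_iff, ← mul_div_assoc]
        constructor
        · rw [le_div_iff₀ hb']; push_cast; rw [one_mul, mul_comm]; exact_mod_cast hj
        · rw [div_lt_iff₀ hb']; push_cast; norm_num; rw [mul_comm]; exact_mod_cast hlt
      rw [this]; rfl
    · rw [mul_div_cancel₀ _ hb'.ne', Int.floor_natCast]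
      omega

/-- The pair `{t, 2t}` contributes exactly one element at `3 X` when the fractional part of `t X`
lies in `[1/6, 5/6)`. -/
theorem card_dil_pair {t : ℕ} (ht : 0 < t) {X : ℚ} {m : ℤ}
    (h1 : (m : ℚ) + 1 / 6 ≤ t * X) (h2 : (t : ℚ) * X < m + 5 / 6) :
    (dil {t, 2 * t} (3 * X)).card = 1 := by
  rw [card_dil, Finset.sum_pair (by omega)]
  set k := ⌊(t : ℚ) * (3 * X)⌋ with hk
  set l := ⌊((2 * t : ℕ) : ℚ) * (3 * X)⌋ with hl
  have e1 := Int.floor_le ((t : ℚ) * (3 * X))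
  have e2 := Int.lt_floor_add_one ((t : ℚ) * (3 * X))
  have e3 := Int.floor_le (((2 * t : ℕ) : ℚ) * (3 * X))
  have e4 := Int.lt_floor_add_one (((2 * t : ℕ) : ℚ) * (3 * X))
  rw [← hk] at e1 e2
  rw [← hl] at e3 e4
  push_cast at e3 e4
  have f1 : 2 * k < l + 1 := by
    have : (2 * k : ℚ) < l + 1 := by linarith
    exact_mod_cast this
  have f2 : l < 2 * k + 2 := by
    have : (l : ℚ) < 2 * k + 2 := by linarith
    exact_mod_cast this
  have f3 : 6 * m + 1 < l + 1 := by
    have : (6 * m + 1 : ℚ) < l + 1 := by linarith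
    exact_mod_cast this
  have f4 : l < 6 * m + 5 := by
    have : (l : ℚ) < 6 * m + 5 := by linarith
    exact_mod_cast this
  split_ifs <;> omega

/-! ### Units far from zero -/

/-- The hypothesis `¬ 3 ∣ M` only serves to exclude `M = 6`, whose units are `1` and `5`. -/
theorem exists_coprime_mid {M : ℕ} (h1 : 1 < M) (h3 : ¬ 3 ∣ M) :
    ∃ u : ℕ, u.Coprime M ∧ M < 6 * u ∧ 6 * u < 5 * M := by
  rcases Nat.even_or_odd' M with ⟨j, rfl | rfl⟩
  · rcases Nat.even_or_odd' j with ⟨i, rfl | rfl⟩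
    · obtain ⟨i, rfl⟩ : ∃ i', i = i' + 1 := ⟨i - 1, by omega⟩
      refine ⟨2 * i + 1, ?_, by omega, by omega⟩
      rw [show 2 * (2 * (i + 1)) = 2 + 2 * (2 * i + 1) by ring]
      simp
    · rcases i with _ | _ | i
      · exact ⟨1, by norm_num⟩
      · omega
      · refine ⟨2 * i + 3, ?_, by omega, by omega⟩
        have h : Nat.Coprime (2 * i + 3) 2 := by
          rw [Nat.coprime_two_right]; exact ⟨i + 1, by ring⟩
        rw [show 2 * (2 * (i + 1 + 1) + 1) = 2 ^ 2 + 2 * (2 * i + 3) by ring]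
        rw [Nat.coprime_add_mul_right_right]
        exact h.pow_right 2
  · refine ⟨j, ?_, by omega, by omega⟩
    simp

/-- If `M ∤ t` and `3 ∤ M`, the fraction `t / M` has a multiple `t p / M`, with `p` prime to `M`,
that is at distance more than `1/6` from the integers. -/
theorem exists_multiplier {t M : ℕ} (hM : 0 < M) (h3 : ¬ 3 ∣ M) (ht : ¬ M ∣ t) :
    ∃ p : ℕ, p.Coprime M ∧ p % 3 = 1 ∧
      ∃ m : ℤ, (6 * m + 1) * M < 6 * (t * p : ℤ) ∧ 6 * (t * p : ℤ) < (6 * m + 5) * M := by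
  obtain ⟨g, t', M', hg, hco, rfl, rfl⟩ :
      ∃ g t' M' : ℕ, 0 < g ∧ t'.Coprime M' ∧ t = t' * g ∧ M = M' * g := by
    obtain ⟨t', M', hco, h1, h2⟩ := Nat.exists_coprime t M
    exact ⟨Nat.gcd t M, t', M', Nat.gcd_pos_of_pos_right _ hM, hco, h1, h2⟩
  have hM'0 : 0 < M' := Nat.pos_of_mul_pos_right hM
  have hM'1 : 1 < M' := by
    rcases Nat.lt_or_ge 1 M' with h | h
    · exact h
    · obtain rfl : M' = 1 := by omega
      exact absurd (by simp) ht
  obtain ⟨u, hu, hu1, hu2⟩ := exists_coprime_mid hM'1 fun h => h3 (h.mul_right g)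
  have : NeZero (M' * g) := ⟨hM.ne'⟩
  obtain ⟨v, hv⟩ := ZMod.unitsMap_surjective (Dvd.intro g rfl : M' ∣ M' * g)
    (ZMod.unitOfCoprime u hu * (ZMod.unitOfCoprime t' hco)⁻¹)
  have hc3 : Nat.Coprime (M' * g) 3 := by
    rw [Nat.coprime_comm]; exact (Nat.Prime.coprime_iff_not_dvd Nat.prime_three).2 h3
  obtain ⟨p, hp1, hp3⟩ := Nat.chineseRemainder hc3 (v : ZMod (M' * g)).val 1
  have hpv : ((p : ℕ) : ZMod (M' * g)) = v := by
    rw [(ZMod.natCast_eq_natCast_iff _ _ _).2 hp1, ZMod.natCast_zmod_val]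
  have htp : ((t' * p : ℕ) : ZMod M') = (u : ℕ) := by
    have h1 : ((p : ℕ) : ZMod M') = ((ZMod.unitsMap (Dvd.intro g rfl : M' ∣ M' * g) v :
        (ZMod M')ˣ) : ZMod M') := by
      rw [ZMod.unitsMap_val, ← hpv, ZMod.cast_natCast (Dvd.intro g rfl)]
    have h2 : ((t' : ℕ) : ZMod M') = (ZMod.unitOfCoprime t' hco : (ZMod M')ˣ) := by simp
    rw [Nat.cast_mul, h1, hv, h2, ← Units.val_mul, mul_comm, mul_assoc, inv_mul_cancel, mul_one]
    simp
  obtain ⟨m, hm⟩ : ∃ m : ℤ, (t' * p : ℤ) = u + M' * m := by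
    rw [ZMod.natCast_eq_natCast_iff] at htp
    obtain ⟨m, hm⟩ := (Nat.modEq_iff_dvd.1 htp.symm)
    exact ⟨m, by push_cast at hm; linarith⟩
  refine ⟨p, ?_, hp3, m, ?_, ?_⟩
  · rw [← ZMod.isUnit_iff_coprime, hpv]; exact v.isUnit
  · have : ((6 * m + 1) * M' : ℤ) < 6 * (t' * p) := by
      rw [hm]; zify at hu1; nlinarith
    push_cast
    nlinarith [mul_lt_mul_of_pos_right this (by exact_mod_cast hg : (0 : ℤ) < g)]
  · have : (6 * (t' * p) : ℤ) < (6 * m + 5) * M' := by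
      rw [hm]; zify at hu2; nlinarith
    push_cast
    nlinarith [mul_lt_mul_of_pos_right this (by exact_mod_cast hg : (0 : ℤ) < g)]

/-! ### The jump at the largest element -/

/-- The count `N(A', X)` cannot be constantly `|A'| / 3` on the set of `X` for which the
fractional part of `t X` lies in `[1/6, 5/6)`. -/
theorem not_equidistributed {A : Finset ℕ} (hA : A.Nonempty) (h3 : ∀ a ∈ A, ¬ 3 ∣ a)
    {t : ℕ} (ht : 0 < t)
    (H : ∀ (X : ℚ) (m : ℤ), (m : ℚ) + 1 / 6 ≤ t * X → (t : ℚ) * X < m + 5 / 6 →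
      3 * (dil A X).card = A.card) : False := by
  obtain ⟨M, hMA, hmax⟩ : ∃ M ∈ A, ∀ a ∈ A, a ≤ M :=
    ⟨A.max' hA, A.max'_mem hA, fun a ha => A.le_max' a ha⟩
  have hM : 0 < M := Nat.pos_of_ne_zero fun h => h3 M hMA (by simp [h])
  have hMq : (0 : ℚ) < M := by exact_mod_cast hM
  have htq : (0 : ℚ) < t := by exact_mod_cast ht
  have hMt : ¬ M ∣ t := by
    intro hd
    have hle := Nat.le_of_dvd ht hd
    have e : (t : ℚ) * (1 / (6 * t)) = 1 / 6 := by field_simp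
    have h := H (1 / (6 * t)) 0 (by rw [e]; norm_num) (by rw [e]; norm_num)
    have h0 : dil A (1 / (6 * t)) = ∅ := by
      refine Finset.filter_false_of_mem fun a ha => ?_
      have hat : (a : ℚ) ≤ t := by exact_mod_cast (hmax a ha).trans hle
      have : ⌊(a : ℚ) * (1 / (6 * t))⌋ = 0 := by
        rw [Int.floor_eq_zero_iff]
        refine ⟨by positivity, ?_⟩
        rw [mul_one_div, div_lt_one (by positivity)]
        linarith
      rw [this]; decide
    rw [h0] at h
    exact hA.card_pos.ne (by simpa using h)
  obtain ⟨p, hpM, hp3, m, hm1, hm2⟩ := exists_multiplier hM (h3 M hMA) hMt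
  -- `ε` is so small that no integer other than `p = M * (p / M)` is crossed between
  -- `p / M - ε` and `p / M`.
  set ε : ℚ := 1 / (6 * t * M ^ 2) with hε
  have hε0 : 0 < ε := by positivity
  have hε1 : 6 * t * M * (M * ε) = 1 := by rw [hε]; field_simp
  have ht1 : (1 : ℚ) ≤ t := by exact_mod_cast ht
  have hM1 : (1 : ℚ) ≤ M := by exact_mod_cast hM
  have hXM : (M : ℚ) * (p / M) = p := mul_div_cancel₀ _ hMq.ne'
  have hq1 : ((6 * m + 1) * M + 1 : ℚ) ≤ 6 * (t * p) := by
    exact_mod_cast (show (6 * m + 1) * (M : ℤ) + 1 ≤ 6 * (t * p) from hm1)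
  have hq2 : (6 * (t * p) : ℚ) < (6 * m + 5) * M := by exact_mod_cast hm2
  have hlow : (m : ℚ) + 1 / 6 ≤ t * (p / M - ε) := by
    have hε2 : 6 * t * (M * ε) ≤ 1 := by
      have : 0 ≤ 6 * t * (M * ε) := by positivity
      nlinarith
    refine le_of_mul_le_mul_left ?_ hMq
    have e : (M : ℚ) * (t * (p / M - ε)) = t * p - t * (M * ε) := by
      rw [← mul_assoc, mul_comm (M : ℚ), mul_assoc, mul_sub, hXM]; ring
    rw [e]; linarith
  have hhigh : (t : ℚ) * (p / M) < m + 5 / 6 := by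
    refine lt_of_mul_lt_mul_left ?_ hMq.le
    have e : (M : ℚ) * (t * (p / M)) = t * p := by
      rw [← mul_assoc, mul_comm (M : ℚ), mul_assoc, hXM]
    rw [e]; linarith
  have hmono : (t : ℚ) * (p / M - ε) < t * (p / M) := by
    apply mul_lt_mul_of_pos_left _ htq; linarith
  have c1 := H (p / M) m (hlow.trans hmono.le) hhigh
  have c2 := H (p / M - ε) m hlow (hmono.trans hhigh)
  have hlt : (dil A (p / M - ε)).card < (dil A (p / M)).card := by
    have hMε : (M : ℚ) * ε ≤ 1 / 6 := by
      have : 0 ≤ (M : ℚ) * ε := by positivity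
      have : 1 ≤ (t : ℚ) * M := by nlinarith
      nlinarith
    have hMε0 : 0 < (M : ℚ) * ε := by positivity
    have hflM : ⌊(M : ℚ) * (p / M - ε)⌋ = p - 1 := by
      rw [mul_sub, hXM, Int.floor_eq_iff]
      push_cast
      constructor <;> linarith
    refine Finset.card_lt_card (Finset.ssubset_iff_subset_ne.2 ⟨?_, ?_⟩)
    · intro a ha
      simp only [dil, Finset.mem_filter] at ha ⊢
      refine ⟨ha.1, ?_⟩
      have haM := hmax a ha.1
      rcases haM.eq_or_lt with rfl | hlt
      · rw [hflM] at ha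
        omega
      · have ha0 : 0 < a := Nat.pos_of_ne_zero fun h => h3 a ha.1 (by simp [h])
        have hndvd : ¬ M ∣ a * p := fun h =>
          absurd (Nat.le_of_dvd ha0 (hpM.symm.dvd_of_dvd_mul_right h)) (by omega)
        have hr : 0 < a * p % M := Nat.pos_of_ne_zero fun h => hndvd (Nat.dvd_of_mod_eq_zero h)
        have hr2 := Nat.mod_lt (a * p) hM
        have hdm := Nat.div_add_mod (a * p) M
        set q := a * p / M
        set r := a * p % M
        have hX : (a : ℚ) * (p / M) = q + r / M := by
          field_simp
          exact_mod_cast hdm.symm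
        have hrM : 1 / (M : ℚ) ≤ r / M := by gcongr; exact_mod_cast hr
        have hrM2 : (r : ℚ) / M < 1 := by rw [div_lt_one hMq]; exact_mod_cast hr2
        have haq : (a : ℚ) ≤ M := by exact_mod_cast haM
        have haε : (a : ℚ) * ε ≤ 1 / M := by
          rw [le_div_iff₀ hMq]
          have : (a : ℚ) * ε * M ≤ M * (M * ε) := by nlinarith
          have h5 : 0 ≤ (M : ℚ) * (M * ε) := by positivity
          nlinarith
        have haε0 : 0 ≤ (a : ℚ) * ε := by positivity
        have f1 : ⌊(a : ℚ) * (p / M)⌋ = q := by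
          rw [hX, Int.floor_eq_iff]
          push_cast
          constructor <;> linarith [show (0 : ℚ) ≤ r / M by positivity]
        have f2 : ⌊(a : ℚ) * (p / M - ε)⌋ = q := by
          rw [mul_sub, hX, Int.floor_eq_iff]
          push_cast
          constructor <;> linarith
        rw [f1, ← f2]
        exact ha.2
    · intro heq
      have : M ∈ dil A (p / M) := by
        simp only [dil, Finset.mem_filter, hXM]
        refine ⟨hMA, ?_⟩
        rw [Int.floor_natCast]; omega
      rw [← heq] at this
      simp only [dil, Finset.mem_filter, hflM] at this
      omega
  omega

/-! ### Induction on the multiples of three -/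

/-- The case of sets without multiples of `3`. -/
theorem exists_dilation_of_not_dvd {A : Finset ℕ} (hA : A.Nonempty) (h3 : ∀ a ∈ A, ¬ 3 ∣ a) :
    (∃ X : ℚ, A.card + 2 ≤ 3 * (dil A X).card) ∨ ∃ t, A = {t, 2 * t} := by
  have h := card_dil_shift A h3 0
  have h0 : dil A 0 = ∅ := by simp [dil]
  rw [h0, Finset.card_empty] at h
  have hpos := hA.card_pos
  by_cases h2 : A.card = 2
  · obtain ⟨a, b, hab, rfl⟩ := Finset.card_eq_two.1 h2
    have key : ∀ a b : ℕ, a < b → ¬ 3 ∣ a →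
        (∃ X : ℚ, ({a, b} : Finset ℕ).card + 2 ≤ 3 * (dil {a, b} X).card) ∨
          ∃ t, ({a, b} : Finset ℕ) = {t, 2 * t} := by
      intro a b hab ha3
      by_cases hb : b = 2 * a
      · exact Or.inr ⟨a, by rw [hb]⟩
      · obtain ⟨X, h1, h2⟩ := exists_dilation_pair
          (Nat.pos_of_ne_zero fun h => ha3 (by simp [h])) hab hb
        refine Or.inl ⟨X, ?_⟩
        rw [card_dil, Finset.sum_pair hab.ne, if_pos h1, if_pos h2, Finset.card_pair hab.ne]
        omega
    rcases lt_or_gt_of_ne hab with hlt | hlt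
    · exact key a b hlt (h3 a (by simp))
    · rw [Finset.pair_comm]
      exact key b a hlt (h3 b (by simp))
  · left
    by_cases h1 : A.card + 2 ≤ 3 * (dil A (0 + 1)).card
    · exact ⟨_, h1⟩
    · exact ⟨0 + 2, by omega⟩

/-- Splitting off the multiples of `3`, divided by `3`. -/
theorem exists_split (A : Finset ℕ) : ∃ A' C : Finset ℕ, (∀ a ∈ A', ¬ 3 ∣ a) ∧
    A = A' ∪ C.image (3 * ·) ∧ Disjoint A' (C.image (3 * ·)) := by
  refine ⟨A.filter (¬ 3 ∣ ·), (A.filter (3 ∣ ·)).image (· / 3), ?_, ?_, ?_⟩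
  · intro a ha; exact (Finset.mem_filter.1 ha).2
  · ext a
    simp only [Finset.mem_union, Finset.mem_filter, Finset.mem_image]
    constructor
    · intro ha
      by_cases h : 3 ∣ a
      · exact Or.inr ⟨a / 3, ⟨a, ⟨ha, h⟩, rfl⟩, by omega⟩
      · exact Or.inl ⟨ha, h⟩
    · rintro (h | ⟨_, ⟨b, ⟨hb, h3⟩, rfl⟩, rfl⟩)
      · exact h.1
      · rwa [Nat.mul_div_cancel' h3]
  · rw [Finset.disjoint_left]
    intro a ha hb
    obtain ⟨c, -, rfl⟩ := Finset.mem_image.1 hb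
    exact (Finset.mem_filter.1 ha).2 (Dvd.intro _ rfl)

/-- Every nonempty finite set of positive integers not of the form `{t, 2t}` has more than
`(|A| + 1) / 3` elements in a single dilated interval. -/
theorem exists_dilation (s : ℕ) : ∀ A : Finset ℕ, ∑ a ∈ A, a ≤ s → (∀ a ∈ A, 0 < a) →
    A.Nonempty → (∃ X : ℚ, A.card + 2 ≤ 3 * (dil A X).card) ∨ ∃ t, A = {t, 2 * t} := by
  induction s with
  | zero =>
    intro A hs hpos hne
    have := Finset.sum_pos hpos hne
    omega
  | succ s ih =>
    intro A hs hpos hne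
    obtain ⟨A', C, hA', hAeq, hdisj⟩ := exists_split A
    have hinj : Function.Injective (3 * · : ℕ → ℕ) := fun a b h => by simpa using h
    rcases C.eq_empty_or_nonempty with rfl | hC
    · obtain rfl : A = A' := by simpa using hAeq
      exact exists_dilation_of_not_dvd hne hA'
    have hCpos : ∀ c ∈ C, 0 < c := fun c hc => by
      have := hpos (3 * c) (by
        rw [hAeq]
        exact Finset.mem_union_right _ (Finset.mem_image_of_mem (3 * ·) hc))
      omega
    have hCs : ∑ c ∈ C, c ≤ s := by
      rw [hAeq, Finset.sum_union hdisj, Finset.sum_image (fun a _ b _ h => hinj h),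
        ← Finset.mul_sum] at hs
      have := Finset.sum_pos hCpos hC
      omega
    have hcard : A.card = A'.card + C.card := by
      rw [hAeq, Finset.card_union_of_disjoint hdisj, Finset.card_image_of_injective _ hinj]
    have hN : ∀ X : ℚ, (dil A X).card = (dil A' X).card + (dil C (3 * X)).card := by
      intro X
      rw [card_dil, card_dil, card_dil, hAeq, Finset.sum_union hdisj,
        Finset.sum_image (fun a _ b _ h => hinj h)]
      congr 1
      refine Finset.sum_congr rfl fun c _ => ?_
      rw [show ((3 * c : ℕ) : ℚ) * X = c * (3 * X) by push_cast; ring]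
    have hsum : ∀ X : ℚ, (dil A X).card + (dil A (X + 1)).card + (dil A (X + 2)).card =
        A'.card + 3 * (dil C (3 * X)).card := by
      intro X
      have h1 := card_dil_three C X 1
      have h2 := card_dil_three C X 2
      push_cast at h1 h2
      rw [hN, hN, hN, h1, h2, ← card_dil_shift A' hA' X]
      ring
    rcases ih C hCs hCpos hC with ⟨Y, hY⟩ | ⟨t, rfl⟩
    · left
      have h := hsum (Y / 3)
      rw [mul_div_cancel₀ Y (by norm_num : (3 : ℚ) ≠ 0)] at h
      by_cases h1 : A.card + 2 ≤ 3 * (dil A (Y / 3)).card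
      · exact ⟨_, h1⟩
      by_cases h2 : A.card + 2 ≤ 3 * (dil A (Y / 3 + 1)).card
      · exact ⟨_, h2⟩
      exact ⟨Y / 3 + 2, by omega⟩
    · have ht : 0 < t := hCpos t (by simp)
      have hc2 : ({t, 2 * t} : Finset ℕ).card = 2 := Finset.card_pair (by omega)
      rcases A'.eq_empty_or_nonempty with rfl | hA'ne
      · right
        refine ⟨3 * t, ?_⟩
        rw [hAeq, Finset.empty_union, Finset.image_insert, Finset.image_singleton,
          Nat.mul_left_comm]
      · left
        by_contra hcon
        push Not at hcon
        refine not_equidistributed hA'ne hA' ht fun X m h1 h2 => ?_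
        have hp := card_dil_pair ht h1 h2
        have e0 := hsum X
        have e1 := hcon X
        have e2 := hcon (X + 1)
        have e3 := hcon (X + 2)
        have e4 := hN X
        omega

theorem largest_sum_free_subset (A : Finset ℕ) (n : ℕ) (hcard : A.card = n)
    (hpos : ∀ a ∈ A, 0 < a) (hgcd : A.gcd id = 1) (hne : A ≠ ({1, 2} : Finset ℕ)) :
    ∃ B ⊆ A, SumFree B ∧ n + 2 ≤ 3 * B.card := by
  have hA : A.Nonempty := by
    rw [Finset.nonempty_iff_ne_empty]
    rintro rfl
    simp at hgcd
  rcases exists_dilation _ A le_rfl hpos hA with ⟨X, hX⟩ | ⟨t, rfl⟩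
  · exact ⟨dil A X, Finset.filter_subset _ _, sumFree_dil A X, hcard ▸ hX⟩
  · have h : t ∣ ({t, 2 * t} : Finset ℕ).gcd id :=
      Finset.dvd_gcd fun b hb => by
        rcases Finset.mem_insert.1 hb with rfl | hb
        · exact dvd_rfl
        · rw [Finset.mem_singleton.1 hb]; exact Dvd.intro_left 2 rfl
    rw [hgcd, Nat.dvd_one] at h
    subst h
    exact absurd rfl hne
end

section
/- Let S and N be positive integers. Suppose that for every finite set A of positive integers with N < |A| ≤ 3N + 2S there exists x ∈ ℝ with f_A(x) ≥ S/3. Then for every finite set A of positive integers with |A| > N there exists x ∈ ℝ with f_A(x) ≥ S/3. -/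
/-!
Strong induction on `∑ a ∈ A, a`. If every element of `A` is divisible by `3`, divide `A` by `3`:
this rescales `x` and does not change the supremum of `fA A`. Otherwise let `C` be the set of
multiples of `3` in `A`, a proper subset.

* Averaging `fA A` over `x`, `x + 1/3`, `x + 2/3` kills the terms with `3 ∤ a`, because exactly one
  of the three points `a (x + j/3)` lies in the middle third modulo `1`; the average is therefore
  `fA C x` (`fA_add_thirds`). So if `N < |C|`, a point that is good for `C` gives one for `A`.
* If `|C| ≤ N` and `|A| > 3N + 2S`, evaluate at `1/3` and `2/3`: for `r = 1, 2` one has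
  `fA A (r/3) = |{a ∈ A : a ≡ r mod 3}| - |A|/3`, and the larger of the two residue classes has at
  least `(|A| - |C|)/2` elements. This gives a value of at least `|A|/6 - |C|/2 > S/3`.
-/

/-- `f x = 2/3` if the fractional part of `x` lies in `[1/3, 2/3)`, and `-1/3` otherwise. -/
noncomputable def f (x : ℝ) : ℝ :=
  if Int.fract x ∈ Set.Ico (1/3 : ℝ) (2/3 : ℝ) then 2/3 else -1/3

/-- `fA A x = ∑_{a ∈ A} f (a x)`. -/
noncomputable def fA (A : Finset ℕ) (x : ℝ) : ℝ := ∑ a ∈ A, f (a * x)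

theorem f_int_add (n : ℤ) (t : ℝ) (h0 : 0 ≤ t) (h1 : t < 1) :
    f (n + t) = if 1/3 ≤ t ∧ t < 2/3 then 2/3 else -1/3 := by
  have : Int.fract ((n : ℝ) + t) = t := by
    rw [Int.fract_intCast_add, Int.fract_eq_self.2 ⟨h0, h1⟩]
  simp only [f, this, Set.mem_Ico]

theorem f_add_int (y : ℝ) (n : ℤ) : f (y + n) = f y := by
  simp only [f, Int.fract_add_intCast]

/-- Exactly one of `y`, `y + 1/3`, `y + 2/3` lies in the middle third modulo `1`. -/
theorem f_thirds (y : ℝ) : f y + f (y + 1/3) + f (y + 2/3) = 0 := by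
  obtain ⟨n, t, h0, h1, rfl⟩ : ∃ (n : ℤ) (t : ℝ), 0 ≤ t ∧ t < 1 ∧ y = n + t :=
    ⟨⌊y⌋, Int.fract y, Int.fract_nonneg y, Int.fract_lt_one y, (Int.floor_add_fract y).symm⟩
  rw [f_int_add n t h0 h1]
  rcases lt_or_ge t (1/3) with h | h
  · rw [add_assoc (n : ℝ) t, add_assoc (n : ℝ) t, f_int_add n (t + 1/3) (by linarith) (by linarith),
      f_int_add n (t + 2/3) (by linarith) (by linarith), if_neg (by intro; linarith),
      if_pos (by constructor <;> linarith), if_neg (by intro; linarith)]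
    norm_num
  rcases lt_or_ge t (2/3) with h' | h'
  · have e : (n : ℝ) + t + 2/3 = (n + 1 : ℤ) + (t - 1/3) := by push_cast; ring
    rw [e, add_assoc (n : ℝ) t, f_int_add n (t + 1/3) (by linarith) (by linarith),
      f_int_add (n + 1) (t - 1/3) (by linarith) (by linarith), if_pos ⟨h, h'⟩,
      if_neg (by intro; linarith), if_neg (by intro; linarith)]
    norm_num
  · have e : (n : ℝ) + t + 2/3 = (n + 1 : ℤ) + (t - 1/3) := by push_cast; ring
    have e' : (n : ℝ) + t + 1/3 = (n + 1 : ℤ) + (t - 2/3) := by push_cast; ring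
    rw [e, e', f_int_add (n + 1) (t - 2/3) (by linarith) (by linarith),
      f_int_add (n + 1) (t - 1/3) (by linarith) (by linarith), if_neg (by intro; linarith),
      if_neg (by intro; linarith), if_pos (by constructor <;> linarith)]
    norm_num

theorem f_mul_thirds (a : ℕ) (x : ℝ) :
    f (a * x) + f (a * (x + 1/3)) + f (a * (x + 2/3)) = if 3 ∣ a then 3 * f (a * x) else 0 := by
  obtain ⟨k, hk | hk | hk⟩ : ∃ k, a = 3 * k ∨ a = 3 * k + 1 ∨ a = 3 * k + 2 :=
    ⟨a / 3, by omega⟩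
  · rw [if_pos (by omega)]
    have e1 : (a : ℝ) * (x + 1/3) = a * x + (k : ℤ) := by rw [hk]; push_cast; ring
    have e2 : (a : ℝ) * (x + 2/3) = a * x + (2 * k : ℤ) := by rw [hk]; push_cast; ring
    rw [e1, e2, f_add_int, f_add_int]
    ring
  · rw [if_neg (by omega), ← f_thirds (a * x)]
    have e1 : (a : ℝ) * (x + 1/3) = a * x + 1/3 + (k : ℤ) := by rw [hk]; push_cast; ring
    have e2 : (a : ℝ) * (x + 2/3) = a * x + 2/3 + (2 * k : ℤ) := by rw [hk]; push_cast; ring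
    rw [e1, e2, f_add_int, f_add_int]
  · rw [if_neg (by omega), ← f_thirds (a * x)]
    have e1 : (a : ℝ) * (x + 1/3) = a * x + 2/3 + (k : ℤ) := by rw [hk]; push_cast; ring
    have e2 : (a : ℝ) * (x + 2/3) = a * x + 1/3 + (2 * k + 1 : ℤ) := by rw [hk]; push_cast; ring
    rw [e1, e2, f_add_int, f_add_int]
    ring

/-- Averaging over translates by thirds keeps only the multiples of `3`. -/
theorem fA_add_thirds (A : Finset ℕ) (x : ℝ) :
    fA A x + fA A (x + 1/3) + fA A (x + 2/3) = 3 * fA (A.filter (3 ∣ ·)) x := by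
  simp only [fA]
  rw [← Finset.sum_add_distrib, ← Finset.sum_add_distrib, Finset.mul_sum, Finset.sum_filter]
  exact Finset.sum_congr rfl fun a _ => f_mul_thirds a x

theorem f_mul_third (a r : ℕ) (hr : r = 1 ∨ r = 2) :
    f (a * (r / 3)) = (if a % 3 = r then 1 else 0) - 1/3 := by
  obtain ⟨k, hk⟩ : ∃ k, a = 3 * k + a % 3 := ⟨a / 3, by omega⟩
  have h3 : a % 3 = 0 ∨ a % 3 = 1 ∨ a % 3 = 2 := by omega
  -- The term `1` accounts for `2 * 2 / 3 = 1 + 1/3`, where the integer part gains a unit.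
  have e : (a : ℝ) * (r / 3) = (if a % 3 = 2 ∧ r = 2 then k * r + 1 else k * r : ℤ)
      + (if a % 3 = 2 ∧ r = 2 then 1/3 else ((a % 3 : ℕ) : ℝ) * r / 3) := by
    have : (a : ℝ) = 3 * k + (a % 3 : ℕ) := by exact_mod_cast hk
    rw [this]
    split_ifs with h
    · rw [h.1, h.2]; push_cast; ring
    · push_cast; ring
  rw [e, f_int_add]
  all_goals rcases h3 with h | h | h <;> rcases hr with rfl | rfl <;> rw [h] <;> norm_num

theorem fA_third (A : Finset ℕ) (r : ℕ) (hr : r = 1 ∨ r = 2) :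
    fA A (r / 3) = (A.filter (· % 3 = r)).card - A.card / 3 := by
  simp only [fA, f_mul_third _ r hr, Finset.sum_sub_distrib, Finset.sum_boole, Finset.sum_const,
    nsmul_eq_mul]
  ring

theorem fA_image_div_three (A : Finset ℕ) (hA : ∀ a ∈ A, 3 ∣ a) (x : ℝ) :
    fA (A.image (· / 3)) x = fA A (x / 3) := by
  unfold fA
  rw [Finset.sum_image]
  · refine Finset.sum_congr rfl fun a ha => ?_
    obtain ⟨k, rfl⟩ := hA a ha
    congr 1
    rw [Nat.mul_div_cancel_left k (by norm_num)]
    push_cast; ring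
  · intro a ha b hb hab
    have := hA a ha
    have := hA b hb
    simp only at hab
    omega

theorem reduction_to_finitely_many_sizes (S N : ℕ) (hS : 0 < S) (hN : 0 < N)
    (h : ∀ A : Finset ℕ, (∀ a ∈ A, 0 < a) → N < A.card → A.card ≤ 3 * N + 2 * S →
      ∃ x : ℝ, (S : ℝ) / 3 ≤ fA A x) :
    ∀ A : Finset ℕ, (∀ a ∈ A, 0 < a) → N < A.card →
      ∃ x : ℝ, (S : ℝ) / 3 ≤ fA A x := by
  intro A
  induction hs : ∑ a ∈ A, a using Nat.strong_induction_on generalizing A with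
  | _ s ih =>
  subst hs
  intro hpos hcard
  by_cases hbig : A.card ≤ 3 * N + 2 * S
  · exact h A hpos hcard hbig
  by_cases hall : ∀ a ∈ A, 3 ∣ a
  · have hinj : Set.InjOn (fun a : ℕ => a / 3) A := by
      intro a ha b hb hab
      have := hall a ha
      have := hall b hb
      simp only at hab
      omega
    have hne : A.Nonempty := Finset.card_pos.1 (by omega)
    obtain ⟨x, hx⟩ := ih _ (by
      rw [Finset.sum_image hinj]
      exact Finset.sum_lt_sum_of_nonempty hne fun a ha =>
        Nat.div_lt_self (hpos a ha) (by norm_num)) (A.image (· / 3)) rfl (by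
      intro b hb
      obtain ⟨a, ha, rfl⟩ := Finset.mem_image.1 hb
      have := hall a ha
      have := hpos a ha
      omega) (by rwa [Finset.card_image_of_injOn hinj])
    exact ⟨x / 3, by rwa [← fA_image_div_three A hall]⟩
  push Not at hall
  obtain ⟨b, hb, hb3⟩ := hall
  by_cases hC : N < (A.filter (3 ∣ ·)).card
  · obtain ⟨x, hx⟩ := ih _ (Finset.sum_lt_sum_of_subset (Finset.filter_subset (3 ∣ ·) A) hb
      (by simp [hb3]) (hpos b hb) (fun _ _ _ => Nat.zero_le _)) _ rfl
      (fun a ha => hpos a (Finset.mem_filter.1 ha).1) hC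
    have key := fA_add_thirds A x
    by_contra! hcon
    linarith [hcon x, hcon (x + 1/3), hcon (x + 2/3)]
  · have hsplit : A.card = (A.filter (3 ∣ ·)).card + (A.filter (· % 3 = 1)).card
        + (A.filter (· % 3 = 2)).card := by
      simp only [Finset.card_filter, Finset.card_eq_sum_ones A]
      rw [← Finset.sum_add_distrib, ← Finset.sum_add_distrib]
      refine Finset.sum_congr rfl fun a _ => ?_
      split_ifs <;> omega
    have h1 := fA_third A 1 (Or.inl rfl)
    have h2 := fA_third A 2 (Or.inr rfl)
    by_contra! hcon
    have c1 := hcon ((1 : ℕ) / 3)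
    have c2 := hcon ((2 : ℕ) / 3)
    rw [h1] at c1
    rw [h2] at c2
    push Not at hC hbig
    have hsplit' : (A.card : ℝ) = (A.filter (3 ∣ ·)).card + (A.filter (· % 3 = 1)).card
        + (A.filter (· % 3 = 2)).card := by exact_mod_cast hsplit
    have hC' : ((A.filter (3 ∣ ·)).card : ℝ) ≤ N := by exact_mod_cast hC
    have hbig' : (3 * N + 2 * S : ℝ) < A.card := by exact_mod_cast hbig
    linarith
end

section
/- Let A be a set of four positive integers whose elements have greatest common divisor 1. Then at least one of the following holds: (i) there exists x ∈ ℝ with f_A(x) > 2/3; (ii) there exist positive integers u and v with A = {u, 2u, v, 2v}; (iii) A is one of the sets {1,2,3,4}, {1,2,4,5}, {1,4,5,8}, {2,3,5,10}. -/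
/-!
Call `x` *middle* if its fractional part lies in `[1/3, 2/3)`. Since `f_A(x)` equals
`#{a ∈ A : a x is middle} - 4/3`, the inequality `f_A(x) > 2/3` says that at least three of the four
multiples `a x` are middle. If this never happens then every triple in `A` is *bad*: its three
multiples are never middle together.

The heart of the proof is the classification of bad triples (`IsBad.classify`): a bad triple
`a < b < c` contains two elements with ratio `2`, or satisfies `a + b = c`, or is proportional to
`(1, 5, 8)` or `(2, 3, 10)`. After dividing by the gcd, a pair with gcd at least `3` in a bad
triple must have ratio `2` (`IsBad.gcd_le_two`), because the third multiple can be moved into the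
middle by shifting `x`. For a coprime pair `b, c` put `n = b + c` and look at `x = k / n`, where
`c k ≡ -b k`. Badness says that multiplication by `m = a / b` modulo `n` maps no element of the
middle third of `ℤ/n` into the middle third, and `mult_classify` shows that `m` is then `0`, `±2`
or `±1/2`, or `n = 13` and `m = ±5`. The reason is that an arithmetic progression with step at most
`n / 3` cannot jump over the middle third, so it has to be short (`walk_bound`); this is applied to
the progression `m j` or to `2 m j`. The resulting congruences, for one or two of the pairs, leave
only the triples listed above.

Finally, imposing the classification on all four triples of `A` gives linear systems in the
four elements, whose solutions are the ones in the theorem (`quad_classify`).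
-/

/-! ### Multiplication by a residue and the middle third -/

/-- The integer `p` lies in the middle third modulo `n`, that is, `p / n` has its fractional part in
`[1/3, 2/3)`. -/
def ZMid (n p : ℤ) : Prop := n ≤ 3 * (p % n) ∧ 3 * (p % n) < 2 * n

instance (n p : ℤ) : Decidable (ZMid n p) := inferInstanceAs (Decidable (_ ∧ _))

lemma zmid_of_eq {n p t : ℤ} (h1 : n ≤ 3 * (p - t * n)) (h2 : 3 * (p - t * n) < 2 * n) :
    ZMid n p := by
  have hn : 0 < n := by linarith
  have : p % n = p - t * n := by
    rw [← Int.sub_mul_emod_self_right p t n]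
    exact Int.emod_eq_of_lt (by linarith) (by linarith)
  unfold ZMid
  rw [this]
  exact ⟨h1, h2⟩

lemma zmid_congr {n p q : ℤ} (h : n ∣ p - q) : ZMid n p ↔ ZMid n q := by
  unfold ZMid
  rw [(Int.emod_emod_of_dvd p (dvd_refl n)).symm, Int.emod_emod_of_dvd p (dvd_refl n),
    Int.emod_eq_emod_iff_emod_sub_eq_zero.2 (Int.emod_eq_zero_of_dvd h)]

lemma exists_gap {n p : ℤ} (hn : 0 < n) (h : ¬ ZMid n p) :
    ∃ t : ℤ, -n ≤ 3 * (p - t * n) ∧ 3 * (p - t * n) < n := by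
  have h0 := Int.emod_nonneg p hn.ne'
  have h1 := Int.emod_lt_of_pos p hn
  have h2 := Int.emod_add_mul_ediv p n
  unfold ZMid at h
  rw [not_and_or] at h
  rcases h with h | h
  · exact ⟨p / n, by constructor <;> nlinarith⟩
  · exact ⟨p / n + 1, by constructor <;> nlinarith⟩

/-- A progression with step at most `n / 3` that avoids the middle third modulo `n` stays in a single
gap, of length `2 n / 3`. -/
lemma walk_bound {n p s : ℤ} (hn : 0 < n) (hs : 3 * |s| ≤ n) (L : ℕ)
    (h : ∀ i : ℕ, i ≤ L → ¬ ZMid n (p + s * i)) : 3 * (|s| * L) < 2 * n := by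
  obtain ⟨t, ht⟩ := exists_gap hn (h 0 (Nat.zero_le _))
  have hs1 := le_abs_self s
  have hs2 := neg_abs_le s
  have key : ∀ i : ℕ, i ≤ L → -n ≤ 3 * (p + s * i - t * n) ∧ 3 * (p + s * i - t * n) < n := by
    intro i
    induction i with
    | zero => intro _; exact ht
    | succ k ih =>
      intro hk
      obtain ⟨h1, h2⟩ := ih (by omega)
      have hno := h (k + 1) hk
      have e : p + s * ((k + 1 : ℕ) : ℤ) = p + s * k + s := by push_cast; ring
      rw [e] at hno ⊢
      constructor
      · by_contra! hlt
        exact hno (zmid_of_eq (t := t - 1) (by linarith) (by linarith))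
      · by_contra! hlt
        exact hno (zmid_of_eq (t := t) (by linarith) (by linarith))
  have hL := key L le_rfl
  have h0 := ht
  push_cast at h0
  rcases abs_cases s with ⟨e, _⟩ | ⟨e, _⟩ <;> rw [e] <;> nlinarith

set_option synthInstance.maxSize 2000 in
set_option synthInstance.maxHeartbeats 400000 in
/-- The finite part of `mult_classify`; the case `n = 13`, `m = ±5` is the only sporadic one. -/
lemma mult_classify_small : ∀ n : ℕ, n < 60 → 0 < n → ∀ m : ℕ, m < n →
    (∃ j ∈ List.range n, (n < 3 * j ∧ 3 * j < 2 * n) ∧ n ≤ 3 * ((m * j) % n) ∧ 3 * ((m * j) % n) < 2 * n) ∨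
    m = 0 ∨ m = 2 ∨ m + 2 = n ∨ (2 * m) % n = 1 % n ∨ (2 * m + 1) % n = 0 ∨
      (n = 13 ∧ (m = 5 ∨ m = 8)) ∨ n ≤ 2 := by
  decide +kernel

/-- Multipliers `m` modulo `n` that map no element of the open middle third into the middle third. -/
lemma mult_classify {n m : ℤ} (hn : 2 < n)
    (h : ∀ j : ℤ, n < 3 * j → 3 * j < 2 * n → ¬ ZMid n (m * j)) :
    n ∣ m ∨ n ∣ m - 2 ∨ n ∣ m + 2 ∨ n ∣ 2 * m - 1 ∨ n ∣ 2 * m + 1 ∨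
      (n = 13 ∧ (n ∣ m - 5 ∨ n ∣ m + 5)) := by
  rcases lt_or_ge n 60 with hlt | hge
  · -- reduce `m` modulo `n` and use the finite table
    have hr0 := Int.emod_nonneg m (show n ≠ 0 by omega)
    have hr1 := Int.emod_lt_of_pos m (show 0 < n by omega)
    obtain ⟨r, hr⟩ := Int.eq_ofNat_of_zero_le hr0
    obtain ⟨N, rfl⟩ := Int.eq_ofNat_of_zero_le (show 0 ≤ n by omega)
    have hm : m = r + N * (m / N) := by rw [← hr]; exact (Int.emod_add_mul_ediv m N).symm
    set q := m / (N : ℤ) with hq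
    rw [hr] at hr1
    rcases mult_classify_small N (by omega) (by omega) r (by omega) with
      ⟨j, _, ⟨hj1, hj2⟩, hj3, hj4⟩ | hc | hc | hc | hc | hc | hc | hc
    · exfalso
      refine h j (by omega) (by omega) ?_
      rw [zmid_congr (q := (r : ℤ) * j) ⟨q * j, by rw [hm]; ring⟩]
      have hj : (N : ℤ) ≤ 3 * (((r : ℤ) * j) % N) ∧ 3 * (((r : ℤ) * j) % N) < 2 * N := by
        constructor
        · exact_mod_cast hj3
        · exact_mod_cast hj4
      exact hj
    · left; rw [hm, hc]; exact ⟨q, by push_cast; ring⟩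
    · right; left; rw [hm, hc]; exact ⟨q, by push_cast; ring⟩
    · right; right; left; rw [hm]; refine ⟨q + 1, ?_⟩
      have : (r : ℤ) + 2 = N := by exact_mod_cast hc
      linarith
    · right; right; right; left
      have h1 : (N : ℤ) ∣ 2 * (r : ℤ) - 1 := by
        apply Int.dvd_of_emod_eq_zero
        rw [← Int.emod_eq_emod_iff_emod_sub_eq_zero]
        exact_mod_cast hc
      obtain ⟨w, hw⟩ := h1
      exact ⟨w + 2 * q, by rw [hm]; linarith⟩
    · right; right; right; right; left
      have h1 : (N : ℤ) ∣ 2 * (r : ℤ) + 1 := by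
        exact_mod_cast Nat.dvd_of_mod_eq_zero hc
      obtain ⟨w, hw⟩ := h1
      exact ⟨w + 2 * q, by rw [hm]; linarith⟩
    · right; right; right; right; right
      obtain ⟨h13, h58⟩ := hc
      subst h13
      refine ⟨rfl, ?_⟩
      push_cast at *
      omega
    · omega
  · -- `r` is a residue of `m` or of `2 m` of absolute value at most `n / 3`
    have hr0 := Int.emod_nonneg m (show n ≠ 0 by omega)
    have hr1 := Int.emod_lt_of_pos m (show 0 < n by omega)
    have hm := Int.emod_add_mul_ediv m n
    have hcase : (∃ r q : ℤ, m = r + q * n ∧ 3 * |r| ≤ n) ∨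
        (∃ r q : ℤ, 2 * m = r + q * n ∧ 3 * |r| ≤ n) := by
      rcases le_or_gt (3 * (m % n)) n with h1 | h1
      · left; refine ⟨m % n, m / n, by linarith, ?_⟩
        rw [abs_of_nonneg hr0]; exact h1
      · rcases le_or_gt (2 * n) (3 * (m % n)) with h2 | h2
        · left; refine ⟨m % n - n, m / n + 1, by linarith, ?_⟩
          rw [abs_of_nonpos (by linarith)]; linarith
        · right; refine ⟨2 * (m % n) - n, 2 * (m / n) + 1, by linarith, ?_⟩
          have : |2 * (m % n) - n| ≤ n / 3 := by rw [abs_le]; constructor <;> omega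
          omega
    rcases hcase with ⟨r, q, hrq, hr⟩ | ⟨r, q, hrq, hr⟩
    · obtain ⟨L, hL⟩ := Int.eq_ofNat_of_zero_le (show 0 ≤ (n - 6) / 3 by omega)
      have hw := walk_bound (p := r * (n / 3 + 1)) (by omega) hr L (by
        intro i hi hz
        refine h (n / 3 + 1 + i) (by omega) (by omega) ?_
        rw [zmid_congr (q := r * (n / 3 + 1) + r * i)
          ⟨q * (n / 3 + 1 + i), by rw [hrq]; ring⟩]
        exact hz)
      have hr2 : |r| ≤ 2 := by
        by_contra! hlt
        have : 3 * (L : ℤ) ≤ |r| * L := by nlinarith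
        omega
      obtain ⟨hr3, hr4⟩ := abs_le.1 hr2
      have hr1' : r ≠ 1 ∧ r ≠ -1 := by
        refine ⟨?_, ?_⟩ <;> rintro rfl
        · exact h (n / 3 + 1) (by omega) (by omega)
            (zmid_of_eq (t := q * (n / 3 + 1)) (by rw [hrq]; ring_nf; omega)
              (by rw [hrq]; ring_nf; omega))
        · exact h (n / 3 + 1) (by omega) (by omega)
            (zmid_of_eq (t := q * (n / 3 + 1) - 1) (by rw [hrq]; ring_nf; omega)
              (by rw [hrq]; ring_nf; omega))
      have : r = 0 ∨ r = 2 ∨ r = -2 := by omega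
      rcases this with rfl | rfl | rfl
      · left; exact ⟨q, by linarith⟩
      · right; left; exact ⟨q, by linarith⟩
      · right; right; left; exact ⟨q, by linarith⟩
    · obtain ⟨L, hL⟩ := Int.eq_ofNat_of_zero_le (show 0 ≤ (n - 6) / 6 by omega)
      have hw := walk_bound (p := m * (n / 3 + 1)) (by omega) hr L (by
        intro i hi hz
        refine h (n / 3 + 1 + 2 * i) (by omega) (by omega) ?_
        rw [zmid_congr (q := m * (n / 3 + 1) + r * i)
          ⟨q * i, by linear_combination (i : ℤ) * hrq⟩]
        exact hz)
      have hr2 : |r| ≤ 4 := by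
        by_contra! hlt
        have : 5 * (L : ℤ) ≤ |r| * L := by nlinarith
        omega
      obtain ⟨hr3, hr4⟩ := abs_le.1 hr2
      -- for even `j = 2 i` one has `m j ≡ r i`
      have heven : ∀ i t : ℤ, n < 6 * i → 6 * i < 2 * n → n ≤ 3 * (r * i - t * n) →
          3 * (r * i - t * n) < 2 * n → False := by
        intro i t h1 h2 h3 h4
        refine h (2 * i) (by linarith) (by linarith) ?_
        rw [zmid_congr (q := r * i) ⟨q * i, by linear_combination i * hrq⟩]
        exact zmid_of_eq h3 h4
      have h3 : r ≠ 3 ∧ r ≠ -3 := by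
        refine ⟨?_, ?_⟩ <;> rintro rfl
        · exact heven (n / 6 + 1) 0 (by omega) (by omega) (by omega) (by omega)
        · exact heven (n / 6 + 1) (-1) (by omega) (by omega) (by omega) (by omega)
      have h2 : r ≠ 2 ∧ r ≠ -2 := by
        refine ⟨?_, ?_⟩ <;> rintro rfl
        · exact heven (n / 6 + 1) 0 (by omega) (by omega) (by omega) (by omega)
        · exact heven (n / 6 + 1) (-1) (by omega) (by omega) (by omega) (by omega)
      by_cases hodd : r = 1 ∨ r = -1
      · rcases hodd with rfl | rfl
        · right; right; right; left; exact ⟨q, by linarith⟩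
        · right; right; right; right; left; exact ⟨q, by linarith⟩
      -- now `r ∈ {0, 4, -4}`
      obtain ⟨e, he, he2⟩ : ∃ e : ℤ, r = 2 * e ∧ (e = 0 ∨ e = 2 ∨ e = -2) := ⟨r / 2, by omega, by omega⟩
      rcases Int.even_or_odd' q with ⟨w, hw' | hw'⟩
      · have hme : m = e + w * n := by
          subst hw' he; linarith
        rcases he2 with rfl | rfl | rfl
        · left; exact ⟨w, by linarith⟩
        · right; left; exact ⟨w, by linarith⟩
        · right; right; left; exact ⟨w, by linarith⟩
      · -- `n = 2 N` and `m ≡ N + e`; an odd `j` close to `N` is sent close to `N`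
        exfalso
        obtain ⟨N, hN⟩ : ∃ N, n = 2 * N := ⟨m - e - w * n, by subst hw' he; linarith⟩
        have hme : m = e + N + w * n := by
          subst hw' he; rw [hN] at hrq ⊢; linarith
        obtain ⟨i, hi⟩ : ∃ i : ℤ, i = N / 2 := ⟨_, rfl⟩
        refine h (2 * i + 1) (by omega) (by omega) ?_
        rw [zmid_congr (q := e * (2 * i + 1) + N)
          ⟨w * (2 * i + 1) + i, by rw [hme, hN]; ring⟩]
        rcases he2 with rfl | rfl | rfl
        · exact zmid_of_eq (t := 0) (by omega) (by omega)
        · exact zmid_of_eq (t := 1) (by omega) (by omega)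
        · exact zmid_of_eq (t := -1) (by omega) (by omega)

/-! ### Bad triples -/

/-- The fractional part of `x` lies in `[1/3, 2/3)`. -/
def Mid (x : ℝ) : Prop := Int.fract x ∈ Set.Ico (1/3 : ℝ) (2/3 : ℝ)

/-- `a x`, `b x`, `c x` never have their fractional parts in `[1/3, 2/3)` simultaneously. -/
def IsBad (a b c : ℕ) : Prop := ∀ x : ℝ, ¬ (Mid (a * x) ∧ Mid (b * x) ∧ Mid (c * x))

lemma IsBad.rotate {a b c : ℕ} (h : IsBad a b c) : IsBad b c a :=
  fun x hx => h x ⟨hx.2.2, hx.1, hx.2.1⟩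

lemma IsBad.swap {a b c : ℕ} (h : IsBad a b c) : IsBad b a c :=
  fun x hx => h x ⟨hx.2.1, hx.1, hx.2.2⟩

lemma IsBad.of_mul {g a b c : ℕ} (hg : 0 < g) (h : IsBad (g * a) (g * b) (g * c)) :
    IsBad a b c := by
  intro x hx
  have hg' : (g : ℝ) ≠ 0 := by positivity
  apply h (x / g)
  have e : ∀ y : ℕ, ((g * y : ℕ) : ℝ) * (x / g) = y * x := by
    intro y; push_cast; field_simp
  rwa [e, e, e]

lemma mid_add_int (x : ℝ) (k : ℤ) : Mid (x + k) ↔ Mid x := by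
  unfold Mid; rw [Int.fract_add_intCast]

lemma mid_of_mem {x : ℝ} (h1 : 1/3 ≤ x) (h2 : x < 2/3) : Mid x := by
  unfold Mid
  rw [Int.fract_eq_self.2 ⟨by linarith, by linarith⟩]
  exact ⟨h1, h2⟩

lemma mid_div {n p : ℤ} (hn : 0 < n) (h : ZMid n p) : Mid ((p : ℝ) / n) := by
  have hn' : (0 : ℝ) < n := by exact_mod_cast hn
  have e : (p : ℝ) / n = ((p % n : ℤ) : ℝ) / n + ((p / n : ℤ) : ℝ) := by
    have := Int.emod_add_mul_ediv p n
    have h' : (p : ℝ) = ((p % n : ℤ) : ℝ) + n * ((p / n : ℤ) : ℝ) := by exact_mod_cast this.symm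
    field_simp
    linarith
  rw [e, mid_add_int]
  obtain ⟨h1, h2⟩ := h
  have h1' : (n : ℝ) ≤ 3 * ((p % n : ℤ) : ℝ) := by exact_mod_cast h1
  have h2' : 3 * ((p % n : ℤ) : ℝ) < 2 * n := by exact_mod_cast h2
  apply mid_of_mem
  · rw [le_div_iff₀ hn']; linarith
  · rw [div_lt_iff₀ hn']; linarith

lemma mid_mul_div {n : ℤ} {a : ℕ} {k : ℤ} (hn : 0 < n) (h : ZMid n (a * k)) :
    Mid ((a : ℝ) * ((k : ℝ) / n)) := by
  have := mid_div hn h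
  push_cast at this
  rwa [mul_div_assoc] at this

lemma IsBad.zmid {a b c : ℕ} (h : IsBad a b c) {n : ℤ} (hn : 0 < n) (k : ℤ) :
    ¬ (ZMid n (a * k) ∧ ZMid n (b * k) ∧ ZMid n (c * k)) :=
  fun ⟨h1, h2, h3⟩ => h (k / n) ⟨mid_mul_div hn h1, mid_mul_div hn h2, mid_mul_div hn h3⟩

lemma exists_inverse {b n : ℤ} (h : IsCoprime b n) : ∃ u : ℤ, n ∣ b * u - 1 := by
  obtain ⟨u, v, huv⟩ := h
  exact ⟨u, -v, by linear_combination huv⟩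

lemma zmid_self {n j : ℤ} (h1 : n < 3 * j) (h2 : 3 * j < 2 * n) : ZMid n j :=
  zmid_of_eq (t := 0) (by linarith) (by linarith)

lemma zmid_neg {n j : ℤ} (h1 : n < 3 * j) (h2 : 3 * j < 2 * n) : ZMid n (-j) :=
  zmid_of_eq (t := -1) (by linarith) (by linarith)

/-- The congruences modulo `b + c` forced on a bad triple with `b`, `c` coprime; here `a / b` is
the multiplier of `mult_classify`. -/
lemma IsBad.congruence {a b c : ℕ} (h : IsBad a b c) (hbc : Nat.Coprime b c) (hn : 2 < b + c) :
    ((b + c : ℤ) ∣ a) ∨ ((b + c : ℤ) ∣ a - 2 * b) ∨ ((b + c : ℤ) ∣ a + 2 * b) ∨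
    ((b + c : ℤ) ∣ 2 * a - b) ∨ ((b + c : ℤ) ∣ 2 * a + b) ∨
    (b + c = 13 ∧ (((b + c : ℤ) ∣ a - 5 * b) ∨ ((b + c : ℤ) ∣ a + 5 * b))) := by
  obtain ⟨n, hndef⟩ : ∃ n : ℤ, n = b + c := ⟨_, rfl⟩
  rw [← hndef]
  have hcop : IsCoprime (b : ℤ) n := by
    rw [hndef, show (b + c : ℤ) = c + b * 1 by ring]
    exact (IsCoprime.add_mul_left_right_iff).2 (Nat.isCoprime_iff_coprime.2 hbc)
  obtain ⟨u, v, hv⟩ := exists_inverse hcop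
  have hm := mult_classify (n := n) (m := a * u) (by omega) (by
    intro j h1 h2 hz
    refine h.zmid (show 0 < n by omega) (u * j) ⟨?_, ?_, ?_⟩
    · rw [← mul_assoc]; exact hz
    · rw [zmid_congr (q := j) ⟨v * j, by linear_combination j * hv⟩]
      exact zmid_self h1 h2
    · rw [zmid_congr (q := -j) ⟨u * j - v * j, by
        linear_combination (-u * j) * hndef - j * hv⟩]
      exact zmid_neg h1 h2)
  rcases hm with ⟨w, hw⟩ | ⟨w, hw⟩ | ⟨w, hw⟩ | ⟨w, hw⟩ | ⟨w, hw⟩ | ⟨h13, ⟨w, hw⟩ | ⟨w, hw⟩⟩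
  · exact Or.inl ⟨b * w - a * v, by linear_combination b * hw - a * hv⟩
  · exact Or.inr (Or.inl ⟨b * w - a * v, by linear_combination b * hw - a * hv⟩)
  · exact Or.inr (Or.inr (Or.inl ⟨b * w - a * v, by linear_combination b * hw - a * hv⟩))
  · exact Or.inr (Or.inr (Or.inr (Or.inl
      ⟨b * w - 2 * a * v, by linear_combination b * hw - 2 * a * hv⟩)))
  · exact Or.inr (Or.inr (Or.inr (Or.inr (Or.inl
      ⟨b * w - 2 * a * v, by linear_combination b * hw - 2 * a * hv⟩))))
  · exact Or.inr (Or.inr (Or.inr (Or.inr (Or.inr ⟨by omega, Or.inl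
      ⟨b * w - a * v, by linear_combination b * hw - a * hv⟩⟩))))
  · exact Or.inr (Or.inr (Or.inr (Or.inr (Or.inr ⟨by omega, Or.inr
      ⟨b * w - a * v, by linear_combination b * hw - a * hv⟩⟩))))

/-- Two distinct positive integers that do not have ratio `2` have simultaneously middle
multiples. -/
lemma exists_mid_pair {a b : ℕ} (ha : 0 < a) (hb : 0 < b) (hab : a ≠ b) (h1 : b ≠ 2 * a)
    (h2 : a ≠ 2 * b) : ∃ x : ℝ, Mid (a * x) ∧ Mid (b * x) := by
  obtain ⟨g, a', b', hg, hcop, rfl, rfl⟩ := Nat.exists_coprime' (Nat.gcd_pos_of_pos_left b ha)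
  have ha' : 0 < a' := Nat.pos_of_mul_pos_right ha
  have hb' : 0 < b' := Nat.pos_of_mul_pos_right hb
  have hab' : a' ≠ b' := by rintro rfl; exact hab rfl
  have h1' : b' ≠ 2 * a' := by rintro rfl; exact h1 (by ring)
  have h2' : a' ≠ 2 * b' := by rintro rfl; exact h2 (by ring)
  obtain ⟨n, hndef⟩ : ∃ n : ℤ, n = a' + b' := ⟨_, rfl⟩
  have hcop : IsCoprime (a' : ℤ) n := by
    rw [hndef, show (a' + b' : ℤ) = b' + a' * 1 by ring]
    exact (IsCoprime.add_mul_left_right_iff).2 (Nat.isCoprime_iff_coprime.2 hcop)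
  obtain ⟨u, v, hv⟩ := exists_inverse hcop
  have hn : 4 ≤ n := by omega
  obtain ⟨j, hj⟩ : ∃ j : ℤ, j = n / 3 + 1 := ⟨_, rfl⟩
  have hj1 : n < 3 * j := by omega
  have hj2 : 3 * j < 2 * n := by omega
  have hA : Mid ((a' : ℝ) * (((u * j : ℤ) : ℝ) / n)) := mid_mul_div (by omega) (by
    rw [zmid_congr (q := j) ⟨v * j, by linear_combination j * hv⟩]
    exact zmid_self hj1 hj2)
  have hB : Mid ((b' : ℝ) * (((u * j : ℤ) : ℝ) / n)) := mid_mul_div (by omega) (by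
    rw [zmid_congr (q := -j) ⟨u * j - v * j, by
        linear_combination (-u * j) * hndef - j * hv⟩]
    exact zmid_neg hj1 hj2)
  have hg' : (g : ℝ) ≠ 0 := by positivity
  refine ⟨((u * j : ℤ) : ℝ) / n / g, ?_⟩
  have e : ∀ y : ℕ, ((y * g : ℕ) : ℝ) * (((u * j : ℤ) : ℝ) / n / g) =
      y * (((u * j : ℤ) : ℝ) / n) := by
    intro y; push_cast; field_simp
  rw [e, e]
  exact ⟨hA, hB⟩

/-- Shifting `x` by `k / gcd a b` fixes `a x` and `b x` modulo `1`, while `c x` runs through a coset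
of `(1 / gcd a b) ℤ`, which meets `[1/3, 2/3)` as soon as the gcd is at least `3`. -/
lemma IsBad.gcd_le_two {a b c : ℕ} (h : IsBad a b c) (ha : 0 < a) (hb : 0 < b) (hab : a ≠ b)
    (h1 : b ≠ 2 * a) (h2 : a ≠ 2 * b) (hc : Nat.Coprime (Nat.gcd a b) c) : Nat.gcd a b ≤ 2 := by
  by_contra! hg
  obtain ⟨x, hxa, hxb⟩ := exists_mid_pair ha hb hab h1 h2
  obtain ⟨a', ha'⟩ := Nat.gcd_dvd_left a b
  obtain ⟨b', hb'⟩ := Nat.gcd_dvd_right a b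
  set g := Nat.gcd a b with hgdef
  obtain ⟨u, v, hv⟩ := exists_inverse (Nat.isCoprime_iff_coprime.2 hc.symm)
  have hg3 : (3 : ℝ) ≤ g := by exact_mod_cast hg
  have hg0 : (0 : ℝ) < g := by linarith
  set i : ℤ := ⌈(g : ℝ) * (1/3 - c * x)⌉ with hi
  have hi1 : (g : ℝ) * (1/3 - c * x) ≤ i := Int.le_ceil _
  have hi2 : (i : ℝ) < g * (1/3 - c * x) + 1 := Int.ceil_lt_add_one _
  have hv' : (c : ℝ) * u = 1 + g * v := by
    have : (c : ℤ) * u = 1 + g * v := by linarith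
    exact_mod_cast this
  apply h (x + (u * i : ℤ) / g)
  refine ⟨?_, ?_, ?_⟩
  · have e : (a : ℝ) * (x + ((u * i : ℤ) : ℝ) / g) = a * x + ((a' * (u * i) : ℤ) : ℝ) := by
      have : (a : ℝ) = g * a' := by exact_mod_cast ha'
      push_cast; rw [this]; field_simp
    rw [e, mid_add_int]; exact hxa
  · have e : (b : ℝ) * (x + ((u * i : ℤ) : ℝ) / g) = b * x + ((b' * (u * i) : ℤ) : ℝ) := by
      have : (b : ℝ) = g * b' := by exact_mod_cast hb'
      push_cast; rw [this]; field_simp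
    rw [e, mid_add_int]; exact hxb
  · have e : (c : ℝ) * (x + ((u * i : ℤ) : ℝ) / g) = (c * x + i / g) + ((v * i : ℤ) : ℝ) := by
      push_cast; field_simp; linear_combination (i : ℝ) * hv'
    rw [e, mid_add_int]
    have hdiv : (i : ℝ) / g * g = i := by field_simp
    apply mid_of_mem
    · by_contra! hlt
      nlinarith
    · by_contra! hlt
      nlinarith

lemma dvd_cases {n p : ℤ} (h : n ∣ p) (h1 : -n < p) (h2 : p < 2 * n) : p = 0 ∨ p = n := by
  obtain ⟨w, rfl⟩ := h
  have hn : 0 < n := by linarith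
  have hw1 : -1 < w := by nlinarith
  have hw2 : w < 2 := by nlinarith
  have : w = 0 ∨ w = 1 := by omega
  rcases this with rfl | rfl <;> simp

/-- The case of overall gcd `1`. All pairwise gcds are then at most `2`. If `b`, `c` are coprime, the
congruences modulo `b + c` suffice; otherwise `b`, `c` are even, the congruences modulo `a + c` give
`c = 2 b - 2 a`, and those modulo `a + b` leave finitely many triples. -/
lemma IsBad.classify_coprime {a b c : ℕ} (h : IsBad a b c) (ha : 0 < a) (hab : a < b) (hbc : b < c)
    (hg : ∀ e : ℕ, e ∣ a → e ∣ b → e ∣ c → e = 1) :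
    b = 2 * a ∨ c = 2 * b ∨ c = 2 * a ∨ c = a + b ∨ (b = 5 * a ∧ c = 8 * a) ∨
      (2 * b = 3 * a ∧ c = 5 * a) := by
  by_cases r1 : b = 2 * a
  · tauto
  by_cases r2 : c = 2 * b
  · tauto
  by_cases r3 : c = 2 * a
  · tauto
  have gbc : Nat.gcd b c ≤ 2 := h.rotate.gcd_le_two (by omega) (by omega) (by omega) (by omega)
    (by omega) (hg _ ((Nat.gcd_dvd_right _ _)) ((Nat.gcd_dvd_left _ _).trans (Nat.gcd_dvd_left _ _))
      ((Nat.gcd_dvd_left _ _).trans (Nat.gcd_dvd_right _ _)))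
  have gab : Nat.gcd a b ≤ 2 := h.gcd_le_two (by omega) (by omega) (by omega) (by omega)
    (by omega) (hg _ ((Nat.gcd_dvd_left _ _).trans (Nat.gcd_dvd_left _ _))
      ((Nat.gcd_dvd_left _ _).trans (Nat.gcd_dvd_right _ _)) ((Nat.gcd_dvd_right _ _)))
  have gac : Nat.gcd a c ≤ 2 := h.swap.rotate.gcd_le_two (by omega) (by omega) (by omega) (by omega)
    (by omega) (hg _ ((Nat.gcd_dvd_left _ _).trans (Nat.gcd_dvd_left _ _))
      (Nat.gcd_dvd_right _ _) ((Nat.gcd_dvd_left _ _).trans (Nat.gcd_dvd_right _ _)))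
  have pbc : 0 < Nat.gcd b c := Nat.gcd_pos_of_pos_left _ (by omega)
  have pab : 0 < Nat.gcd a b := Nat.gcd_pos_of_pos_left _ (by omega)
  have pac : 0 < Nat.gcd a c := Nat.gcd_pos_of_pos_left _ (by omega)
  rcases (show Nat.gcd b c = 1 ∨ Nat.gcd b c = 2 by omega) with h1 | h2
  · rcases h.congruence h1 (by omega) with
      ⟨w, hw⟩ | ⟨w, hw⟩ | ⟨w, hw⟩ | ⟨w, hw⟩ | ⟨w, hw⟩ | ⟨h13, hw⟩
    · have := dvd_cases ⟨w, hw⟩ (by omega) (by omega)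
      omega
    · have := dvd_cases ⟨w, hw⟩ (by omega) (by omega)
      omega
    · have := dvd_cases ⟨w, hw⟩ (by omega) (by omega)
      omega
    · have := dvd_cases ⟨w, hw⟩ (by omega) (by omega)
      omega
    · have := dvd_cases ⟨w, hw⟩ (by omega) (by omega)
      omega
    · rw [show (b + c : ℤ) = 13 by exact_mod_cast h13] at hw
      by_cases h467 : a = 4 ∧ b = 6
      · -- `(4, 6, 7)` survives modulo `6 + 7`, but not modulo `4 + 7`
        obtain ⟨rfl, rfl⟩ := h467
        obtain rfl : c = 7 := by omega
        have := h.swap.congruence (by decide) (by omega)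
        omega
      · have hb6 : b ≤ 6 := by omega
        have hc13 : c = 13 - b := by omega
        clear gbc gab gac pbc pab pac hg h1 h
        interval_cases b <;> interval_cases a <;> omega
  · -- now `b`, `c` are even and `a` is odd
    have eb : 2 ∣ b := h2 ▸ Nat.gcd_dvd_left b c
    have ec : 2 ∣ c := h2 ▸ Nat.gcd_dvd_right b c
    have oa : ¬ 2 ∣ a := fun ea => absurd (hg 2 ea eb ec) (by decide)
    have cab : Nat.gcd a b = 1 := by
      have : Nat.gcd a b ≠ 2 := fun e => oa (e ▸ Nat.gcd_dvd_left a b)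
      omega
    have cac : Nat.gcd a c = 1 := by
      have : Nat.gcd a c ≠ 2 := fun e => oa (e ▸ Nat.gcd_dvd_left a c)
      omega
    have hc : c + 2 * a = 2 * b := by
      rcases h.swap.congruence cac (by omega) with hw | hw | hw | hw | hw | ⟨h13, hw⟩
      · have := dvd_cases hw (by omega) (by omega)
        omega
      · have := dvd_cases hw (by omega) (by omega)
        omega
      · have := dvd_cases hw (by omega) (by omega)
        omega
      · have := dvd_cases hw (by omega) (by omega)
        omega
      · have := dvd_cases hw (by omega) (by omega)
        omega
      · rw [show (a + c : ℤ) = 13 by exact_mod_cast h13] at hw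
        have : a = 1 ∧ b = 8 ∧ c = 12 := by
          have ha6 : a ≤ 6 := by omega
          clear gbc gab gac pbc pab pac hg h2 h cac cab
          interval_cases a <;> omega
        obtain ⟨rfl, rfl, rfl⟩ := this
        exact absurd h2 (by decide)
    have hcop : IsCoprime (a + b : ℤ) a := by
      have := (IsCoprime.add_mul_left_right_iff (x := (a : ℤ)) (y := b) (z := 1)).2
        (Nat.isCoprime_iff_coprime.2 cab)
      rw [mul_one, add_comm] at this
      exact this.symm
    have hcz : (c : ℤ) = 2 * b - 2 * a := by omega
    -- modulo `a + b` one has `c ≡ -4 a`, so each congruence says that `a + b` divides a small number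
    have hdvd : (a + b : ℤ) ∣ 4 ∨ (a + b : ℤ) ∣ 6 ∨ (a + b : ℤ) ∣ 2 ∨ (a + b : ℤ) ∣ 9 ∨
        (a + b : ℤ) ∣ 7 := by
      rcases h.rotate.rotate.congruence cab (by omega) with
        ⟨w, hw⟩ | ⟨w, hw⟩ | ⟨w, hw⟩ | ⟨w, hw⟩ | ⟨w, hw⟩ | ⟨h13, hw⟩
      · exact Or.inl (hcop.dvd_of_dvd_mul_right ⟨2 - w, by linear_combination hcz - hw⟩)
      · exact Or.inr (Or.inl (hcop.dvd_of_dvd_mul_right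
          ⟨2 - w, by linear_combination hcz - hw⟩))
      · exact Or.inr (Or.inr (Or.inl (hcop.dvd_of_dvd_mul_right
          ⟨2 - w, by linear_combination hcz - hw⟩)))
      · exact Or.inr (Or.inr (Or.inr (Or.inl (hcop.dvd_of_dvd_mul_right
          ⟨4 - w, by linear_combination 2 * hcz - hw⟩))))
      · exact Or.inr (Or.inr (Or.inr (Or.inr (hcop.dvd_of_dvd_mul_right
          ⟨4 - w, by linear_combination 2 * hcz - hw⟩))))
      · rw [show (a + b : ℤ) = 13 by exact_mod_cast h13] at hw
        omega
    have hle : (a + b : ℤ) ≤ 9 := by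
      rcases hdvd with hd | hd | hd | hd | hd <;> have := Int.le_of_dvd (by norm_num) hd <;> omega
    have hfin : (a = 1 ∧ b = 6 ∧ c = 10) ∨ (a = 1 ∧ b = 8 ∧ c = 14) := by
      have hb : b ≤ 8 := by omega
      have ha4 : a ≤ 4 := by omega
      interval_cases a <;> interval_cases b <;> omega
    rcases hfin with ⟨rfl, rfl, rfl⟩ | ⟨rfl, rfl, rfl⟩
    · exact absurd (by decide) (h.zmid (n := 9) (by norm_num) 5)
    · exact absurd (by decide) (h.zmid (n := 11) (by norm_num) 5)

/-- A bad triple has two elements with ratio `2`, or is of the form `a + b = c`, or is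
proportional to `(1, 5, 8)` or `(2, 3, 10)`. -/
lemma IsBad.classify {a b c : ℕ} (h : IsBad a b c) (ha : 0 < a) (hab : a < b) (hbc : b < c) :
    b = 2 * a ∨ c = 2 * b ∨ c = 2 * a ∨ c = a + b ∨ (b = 5 * a ∧ c = 8 * a) ∨
      (2 * b = 3 * a ∧ c = 5 * a) := by
  obtain ⟨g, hgdef⟩ : ∃ g, g = Nat.gcd (Nat.gcd a b) c := ⟨_, rfl⟩
  have hg : 0 < g := hgdef ▸ Nat.gcd_pos_of_pos_left _ (Nat.gcd_pos_of_pos_left _ ha)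
  obtain ⟨a', ha'⟩ : g ∣ a := hgdef ▸ (Nat.gcd_dvd_left _ _).trans (Nat.gcd_dvd_left _ _)
  obtain ⟨b', hb'⟩ : g ∣ b := hgdef ▸ (Nat.gcd_dvd_left _ _).trans (Nat.gcd_dvd_right _ _)
  obtain ⟨c', hc'⟩ : g ∣ c := hgdef ▸ Nat.gcd_dvd_right _ _
  have hprim : ∀ e : ℕ, e ∣ a' → e ∣ b' → e ∣ c' → e = 1 := by
    intro e h1 h2 h3
    have : g * e ∣ g := by
      nth_rewrite 2 [hgdef]
      refine Nat.dvd_gcd (Nat.dvd_gcd ?_ ?_) ?_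
      · rw [ha']; exact Nat.mul_dvd_mul_left g h1
      · rw [hb']; exact Nat.mul_dvd_mul_left g h2
      · rw [hc']; exact Nat.mul_dvd_mul_left g h3
    exact Nat.dvd_one.1 (Nat.dvd_of_mul_dvd_mul_left hg (by simpa using this))
  clear hgdef
  subst ha' hb' hc'
  have := (h.of_mul hg).classify_coprime (Nat.pos_of_mul_pos_left ha)
    (Nat.lt_of_mul_lt_mul_left hab) (Nat.lt_of_mul_lt_mul_left hbc) hprim
  rcases this with h | h | h | h | ⟨h, h'⟩ | ⟨h, h'⟩
  · left; rw [h]; ring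
  · right; left; rw [h]; ring
  · right; right; left; rw [h]; ring
  · right; right; right; left; rw [h]; ring
  · right; right; right; right; left; rw [h, h']; constructor <;> ring
  · right; right; right; right; right; rw [h']
    exact ⟨by linear_combination g * h, by ring⟩

/-! ### Sets of four elements -/

lemma quad_classify {a b c d : ℕ} (ha : 0 < a) (hab : a < b) (hbc : b < c) (hcd : c < d)
    (h1 : IsBad a b c) (h2 : IsBad a b d) (h3 : IsBad a c d) (h4 : IsBad b c d) :
    (b = 2 * a ∧ d = 2 * c) ∨ (c = 2 * a ∧ d = 2 * b) ∨
    (b = 2 * a ∧ c = 3 * a ∧ d = 4 * a) ∨ (b = 2 * a ∧ c = 4 * a ∧ d = 5 * a) ∨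
    (b = 4 * a ∧ c = 5 * a ∧ d = 8 * a) ∨ (2 * b = 3 * a ∧ 2 * c = 5 * a ∧ d = 5 * a) := by
  have k1 := h1.classify ha hab hbc
  have k2 := h2.classify ha hab (hbc.trans hcd)
  have k3 := h3.classify ha (hab.trans hbc) hcd
  have k4 := h4.classify (ha.trans hab) hbc hcd
  clear h1 h2 h3 h4
  rcases k1 with k1 | k1 | k1 | k1 | k1 | k1 <;> rcases k2 with k2 | k2 | k2 | k2 | k2 | k2 <;>
    first
    | (exfalso; omega)
    | (rcases k3 with k3 | k3 | k3 | k3 | k3 | k3 <;>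
        first
        | (exfalso; omega)
        | (rcases k4 with k4 | k4 | k4 | k4 | k4 | k4 <;> omega))

lemma isBad_of_le {A : Finset ℕ} (hA : A.card = 4) (h : ∀ x : ℝ, fA A x ≤ 2/3) {a b c : ℕ}
    (ha : a ∈ A) (hb : b ∈ A) (hc : c ∈ A) (hab : a ≠ b) (hac : a ≠ c) (hbc : b ≠ c) :
    IsBad a b c := by
  rintro x ⟨h1, h2, h3⟩
  have hsub : ({a, b, c} : Finset ℕ) ⊆ A := by
    intro y hy
    simp only [Finset.mem_insert, Finset.mem_singleton] at hy
    rcases hy with rfl | rfl | rfl <;> assumption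
  have hcard : ({a, b, c} : Finset ℕ).card = 3 := Finset.card_eq_three.2 ⟨a, b, c, hab, hac, hbc, rfl⟩
  have hsd : (A \ {a, b, c}).card = 1 := by rw [Finset.card_sdiff_of_subset hsub, hA, hcard]
  have hf : ∀ y : ℝ, Mid y → f y = 2/3 := fun y hy => if_pos hy
  obtain ⟨d, hd⟩ := Finset.card_eq_one.1 hsd
  have hfd : -1/3 ≤ f (d * x) := by unfold f; split_ifs <;> norm_num
  have hx := h x
  unfold fA at hx
  rw [← Finset.sum_sdiff hsub, hd, Finset.sum_singleton, Finset.sum_insert (by simp [hab, hac]),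
    Finset.sum_insert (by simp [hbc]), Finset.sum_singleton, hf _ h1, hf _ h2, hf _ h3] at hx
  linarith

theorem size_four_classification (A : Finset ℕ) (hcard : A.card = 4)
    (hpos : ∀ a ∈ A, 0 < a) (hgcd : A.gcd id = 1) :
    (∃ x : ℝ, 2/3 < fA A x) ∨
    (∃ u v : ℕ, 0 < u ∧ 0 < v ∧ A = ({u, 2*u, v, 2*v} : Finset ℕ)) ∨
    A = ({1,2,3,4} : Finset ℕ) ∨ A = ({1,2,4,5} : Finset ℕ) ∨
    A = ({1,4,5,8} : Finset ℕ) ∨ A = ({2,3,5,10} : Finset ℕ) := by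
  by_cases hex : ∃ x : ℝ, 2/3 < fA A x
  · exact Or.inl hex
  right
  push Not at hex
  obtain ⟨a, b, c, d, hab, hbc, hcd, hA⟩ :
      ∃ a b c d : ℕ, a < b ∧ b < c ∧ c < d ∧ A = {a, b, c, d} := by
    let e := A.orderEmbOfFin hcard
    refine ⟨e 0, e 1, e 2, e 3, e.lt_iff_lt.2 (by decide), e.lt_iff_lt.2 (by decide),
      e.lt_iff_lt.2 (by decide), ?_⟩
    have h := Finset.image_orderEmbOfFin_univ A hcard
    ext y
    conv_lhs => rw [← h]
    simp only [Finset.mem_image, Finset.mem_univ, true_and, Fin.exists_fin_succ, Fin.exists_fin_zero]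
    simp [eq_comm, e]
  have ma : a ∈ A := by simp [hA]
  have mb : b ∈ A := by simp [hA]
  have mc : c ∈ A := by simp [hA]
  have md : d ∈ A := by simp [hA]
  have ha := hpos a ma
  have hunit : ∀ e : ℕ, e ∣ a → e ∣ b → e ∣ c → e ∣ d → e = 1 := by
    intro e h1 h2 h3 h4
    rw [← Nat.dvd_one, ← hgcd]
    apply Finset.dvd_gcd
    intro y hy
    simp only [hA, Finset.mem_insert, Finset.mem_singleton] at hy
    rcases hy with rfl | rfl | rfl | rfl <;> assumption
  have bad := fun {x y z : ℕ} => isBad_of_le (a := x) (b := y) (c := z) hcard hex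
  rcases quad_classify ha hab hbc hcd
      (bad ma mb mc (by omega) (by omega) (by omega)) (bad ma mb md (by omega) (by omega) (by omega))
      (bad ma mc md (by omega) (by omega) (by omega)) (bad mb mc md (by omega) (by omega) (by omega))
    with ⟨h1, h2⟩ | ⟨h1, h2⟩ | ⟨h1, h2, h3⟩ | ⟨h1, h2, h3⟩ | ⟨h1, h2, h3⟩ | ⟨h1, h2, h3⟩
  · left; exact ⟨a, c, ha, by omega, by rw [hA, h1, h2]⟩
  · left
    refine ⟨a, b, ha, by omega, ?_⟩
    rw [hA, h1, h2]
    ext y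
    simp only [Finset.mem_insert, Finset.mem_singleton]
    tauto
  · have := hunit a dvd_rfl ⟨2, by omega⟩ ⟨3, by omega⟩ ⟨4, by omega⟩
    subst this; right; left; rw [hA, h1, h2, h3]
  · have := hunit a dvd_rfl ⟨2, by omega⟩ ⟨4, by omega⟩ ⟨5, by omega⟩
    subst this; right; right; left; rw [hA, h1, h2, h3]
  · have := hunit a dvd_rfl ⟨4, by omega⟩ ⟨5, by omega⟩ ⟨8, by omega⟩
    subst this; right; right; right; left; rw [hA, h1, h2, h3]
  · have := hunit (a / 2) ⟨2, by omega⟩ ⟨3, by omega⟩ ⟨5, by omega⟩ ⟨10, by omega⟩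
    have e1 : a = 2 := by omega
    have e2 : b = 3 := by omega
    have e3 : c = 5 := by omega
    have e4 : d = 10 := by omega
    right; right; right; right; rw [hA, e1, e2, e3, e4]
end

section
/- Let A be a finite set of positive integers, let A₁ = {a ∈ A : 3 ∣ a} and A₀ = A \ A₁. Then there exists x ∈ ℝ with f_A(x) ≥ |A₀|/6 − |A₁|/3. -/
lemma f_add_natCast (x : ℝ) (n : ℕ) : f (x + n) = f x := by
  simp only [f, Int.fract_add_natCast]

lemma f_of_mem_unit {x : ℝ} (h0 : 0 ≤ x) (h1 : x < 1) :
    f x = if x ∈ Set.Ico (1/3 : ℝ) (2/3 : ℝ) then 2/3 else -1/3 := by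
  rw [f, Int.fract_eq_self.2 ⟨h0, h1⟩]

lemma f_third_add_f_two_thirds (a : ℕ) :
    f (a * (1/3)) + f (a * (2/3)) = if 3 ∣ a then -2/3 else 1/3 := by
  have h0 : f 0 = -1/3 := by rw [f_of_mem_unit] <;> norm_num
  have h1 : f (1/3) = 2/3 := by rw [f_of_mem_unit] <;> norm_num
  have h2 : f (2/3) = -1/3 := by rw [f_of_mem_unit] <;> norm_num
  obtain ⟨k, rfl | rfl | rfl⟩ : ∃ k, a = 3 * k ∨ a = 3 * k + 1 ∨ a = 3 * k + 2 :=
    ⟨a / 3, by omega⟩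
  · rw [if_pos (by omega),
      show ((3 * k : ℕ) : ℝ) * (1/3) = 0 + (k : ℕ) by push_cast; ring,
      show ((3 * k : ℕ) : ℝ) * (2/3) = 0 + (2 * k : ℕ) by push_cast; ring,
      f_add_natCast, f_add_natCast, h0]
    norm_num
  · rw [if_neg (by omega),
      show ((3 * k + 1 : ℕ) : ℝ) * (1/3) = 1/3 + (k : ℕ) by push_cast; ring,
      show ((3 * k + 1 : ℕ) : ℝ) * (2/3) = 2/3 + (2 * k : ℕ) by push_cast; ring,
      f_add_natCast, f_add_natCast, h1, h2]
    norm_num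
  · rw [if_neg (by omega),
      show ((3 * k + 2 : ℕ) : ℝ) * (1/3) = 2/3 + (k : ℕ) by push_cast; ring,
      show ((3 * k + 2 : ℕ) : ℝ) * (2/3) = 1/3 + (2 * k + 1 : ℕ) by push_cast; ring,
      f_add_natCast, f_add_natCast, h1, h2]
    norm_num

theorem pigeonhole_mod_three (A : Finset ℕ) (hpos : ∀ a ∈ A, 0 < a)
    (A₁ A₀ : Finset ℕ) (hA₁ : A₁ = A.filter (fun a => 3 ∣ a)) (hA₀ : A₀ = A \ A₁) :
    ∃ x : ℝ, (A₀.card : ℝ) / 6 - (A₁.card : ℝ) / 3 ≤ fA A x := by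
  have hA₀' : A₀ = A.filter (fun a => ¬ 3 ∣ a) := by
    rw [hA₀, hA₁, Finset.filter_not]
  have hsum : fA A (1/3) + fA A (2/3) = A₁.card * (-2/3) + A₀.card * (1/3) := by
    rw [fA, fA, ← Finset.sum_add_distrib,
      Finset.sum_congr rfl fun a _ => f_third_add_f_two_thirds a, Finset.sum_ite,
      ← hA₁, ← hA₀', Finset.sum_const, Finset.sum_const, nsmul_eq_mul, nsmul_eq_mul]
  by_contra! h
  linarith [h (1/3), h (2/3)]
end

section
/- Let a and b be coprime positive integers. Then the Lebesgue measure of the set {x ∈ [0, 1) : {a·x} ∈ [1/3, 2/3) and {b·x} ∈ [1/3, 2/3)} equals (1/9)·(1 + 2·χ(a·b)/(a·b)). -/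
/-!
Put `N = 3ab`. For `x ∈ [k/N, (k+1)/N)` one has `⌊3ax⌋ = ⌊k/b⌋` and `⌊3bx⌋ = ⌊k/a⌋`, and `{y}` lies
in the middle third iff `⌊3y⌋ ≡ 1 (mod 3)`. Hence the set is a disjoint union of intervals of length
`1/N`, one for each `k < N` such that `⌊k/b⌋ ≡ ⌊k/a⌋ ≡ 1 (mod 3)`, i.e. such that
`k mod 3b ∈ [b, 2b)` and `k mod 3a ∈ [a, 2a)`.

As `gcd(3a, 3b) = 3` and `lcm(3a, 3b) = N`, the Chinese remainder theorem puts these `k` in bijection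
with the pairs `(r, s) ∈ [b, 2b) × [a, 2a)` with `r ≡ s (mod 3)` (`card_goodIndices`). The interval
`[n, 2n)` contains `(n - χ(n))/3 + χ(n)·[c = 1]` elements of residue `c` modulo `3`
(`card_residue`); summing the products over `c` gives `(ab + 2χ(a)χ(b))/3`.
-/

/-- The nontrivial Dirichlet character modulo 3. -/
def χ (n : ℤ) : ℤ := if n % 3 = 1 then 1 else if n % 3 = 2 then -1 else 0

lemma chi_mul (m n : ℤ) : χ (m * n) = χ m * χ n := by
  have hm : m % 3 = 0 ∨ m % 3 = 1 ∨ m % 3 = 2 := by omega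
  have hn : n % 3 = 0 ∨ n % 3 = 1 ∨ n % 3 = 2 := by omega
  rcases hm with h | h | h <;> rcases hn with h' | h' | h' <;>
    simp [χ, Int.mul_emod, h, h']

lemma card_range_residue (c : ℕ) (hc : c < 3) (n : ℕ) :
    ((Finset.range n).filter (fun r => r % 3 = c)).card = (n + 2 - c) / 3 := by
  induction n with
  | zero => simp; omega
  | succ n ih =>
    rw [Finset.range_add_one, Finset.filter_insert]
    split_ifs with h
    · rw [Finset.card_insert_of_notMem (by simp), ih]; omega
    · rw [ih]; omega

lemma card_residue (c : ℕ) (hc : c < 3) (n : ℕ) :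
    3 * (((Finset.Ico n (2 * n)).filter (fun r => r % 3 = c)).card : ℤ)
      = n - χ n + 3 * (if c = 1 then χ n else 0) := by
  have hsplit : ((Finset.range (2 * n)).filter (fun r => r % 3 = c)).card
      = ((Finset.range n).filter (fun r => r % 3 = c)).card
        + ((Finset.Ico n (2 * n)).filter (fun r => r % 3 = c)).card := by
    rw [← Finset.card_union_of_disjoint, ← Finset.filter_union]
    · congr 2
      ext r
      simp only [Finset.mem_range, Finset.mem_union, Finset.mem_Ico]
      omega
    · apply Finset.disjoint_filter_filter
      rw [Finset.disjoint_left]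
      intro r
      simp only [Finset.mem_range, Finset.mem_Ico]
      omega
  rw [card_range_residue c hc, card_range_residue c hc] at hsplit
  unfold χ
  split_ifs <;> omega

/-- The indices `k < 3ab` of the intervals `[k/(3ab), (k+1)/(3ab))` that make up the set of the
theorem. -/
def goodIndices (a b : ℕ) : Finset ℕ :=
  (Finset.range (3 * a * b)).filter (fun k => k / b % 3 = 1 ∧ k / a % 3 = 1)

lemma div_mod_three_iff {b : ℕ} (hb : 0 < b) (k : ℕ) :
    k / b % 3 = 1 ↔ b ≤ k % (3 * b) ∧ k % (3 * b) < 2 * b := by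
  rw [mul_comm 3 b, ← Nat.mod_mul_right_div_self, Nat.div_eq_iff hb]
  omega

/-- By the Chinese remainder theorem, `k ↦ (k mod 3b, k mod 3a)` is a bijection onto these pairs. -/
lemma card_goodIndices {a b : ℕ} (ha : 0 < a) (hb : 0 < b) (hab : Nat.Coprime a b) :
    (goodIndices a b).card =
      (((Finset.Ico b (2 * b)) ×ˢ (Finset.Ico a (2 * a))).filter
        (fun p => p.1 % 3 = p.2 % 3)).card := by
  have hg : Nat.gcd (3 * b) (3 * a) = 3 := by
    rw [Nat.gcd_mul_left, hab.symm.gcd_eq_one]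
  have hl : Nat.lcm (3 * b) (3 * a) = 3 * a * b := by
    rw [Nat.lcm_mul_left, hab.symm.lcm_eq_mul]; ring
  refine Finset.card_bij (fun k _ => (k % (3 * b), k % (3 * a))) ?_ ?_ ?_
  · intro k hk
    simp only [goodIndices, Finset.mem_filter, Finset.mem_range, div_mod_three_iff ha,
      div_mod_three_iff hb] at hk
    simp only [Finset.mem_filter, Finset.mem_product, Finset.mem_Ico, Nat.mod_mul_right_mod]
    exact ⟨hk.2, trivial⟩
  · intro k hk l hl' h
    simp only [goodIndices, Finset.mem_filter, Finset.mem_range] at hk hl'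
    simp only [Prod.mk.injEq] at h
    have h1 : k ≡ l [MOD Nat.lcm (3 * b) (3 * a)] := Nat.mod_lcm h.1 h.2
    rw [hl] at h1
    exact h1.eq_of_lt_of_lt hk.1 hl'.1
  · rintro ⟨r, s⟩ h
    simp only [Finset.mem_filter, Finset.mem_product, Finset.mem_Ico] at h
    have hrs : r ≡ s [MOD Nat.gcd (3 * b) (3 * a)] := by rw [hg]; exact h.2
    have hlt := Nat.chineseRemainder'_lt_lcm hrs (by omega) (by omega)
    obtain ⟨hk1, hk2⟩ := (Nat.chineseRemainder' hrs).2
    rw [hl] at hlt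
    generalize (Nat.chineseRemainder' hrs : ℕ) = k at hlt hk1 hk2
    have e1 : k % (3 * b) = r := by rw [hk1]; exact Nat.mod_eq_of_lt (by omega)
    have e2 : k % (3 * a) = s := by rw [hk2]; exact Nat.mod_eq_of_lt (by omega)
    refine ⟨k, ?_, by rw [e1, e2]⟩
    simp only [goodIndices, Finset.mem_filter, Finset.mem_range, div_mod_three_iff ha,
      div_mod_three_iff hb, e1, e2]
    exact ⟨hlt, h.1⟩

lemma three_mul_card_goodIndices {a b : ℕ} (ha : 0 < a) (hb : 0 < b) (hab : Nat.Coprime a b) :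
    3 * ((goodIndices a b).card : ℤ) = a * b + 2 * χ ((a : ℤ) * b) := by
  have hsum : (goodIndices a b).card = ∑ c ∈ Finset.range 3,
      ((Finset.Ico b (2 * b)).filter (fun r => r % 3 = c)).card *
      ((Finset.Ico a (2 * a)).filter (fun r => r % 3 = c)).card := by
    rw [card_goodIndices ha hb hab, Finset.card_eq_sum_card_fiberwise
      (f := fun p : ℕ × ℕ => p.1 % 3) (t := Finset.range 3)]
    · refine Finset.sum_congr rfl fun c _ => ?_
      rw [← Finset.card_product]
      congr 1
      ext ⟨r, s⟩
      simp only [Finset.mem_filter, Finset.mem_product]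
      grind
    · intro p _
      simpa using Nat.mod_lt _ (by norm_num)
  have A := fun c hc => card_residue c hc a
  have B := fun c hc => card_residue c hc b
  have A0 := A 0 (by norm_num)
  have A1 := A 1 (by norm_num)
  have A2 := A 2 (by norm_num)
  have B0 := B 0 (by norm_num)
  have B1 := B 1 (by norm_num)
  have B2 := B 2 (by norm_num)
  rw [hsum, chi_mul]
  simp only [Finset.sum_range_succ, Finset.sum_range_zero]
  push_cast
  simp only [zero_ne_one, if_false, if_true, OfNat.ofNat_ne_one] at A0 A1 A2 B0 B1 B2
  generalize (((Finset.Ico a (2 * a)).filter (fun r => r % 3 = 0)).card : ℤ) = x0 at *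
  generalize (((Finset.Ico a (2 * a)).filter (fun r => r % 3 = 1)).card : ℤ) = x1 at *
  generalize (((Finset.Ico a (2 * a)).filter (fun r => r % 3 = 2)).card : ℤ) = x2 at *
  generalize (((Finset.Ico b (2 * b)).filter (fun r => r % 3 = 0)).card : ℤ) = y0 at *
  generalize (((Finset.Ico b (2 * b)).filter (fun r => r % 3 = 1)).card : ℤ) = y1 at *
  generalize (((Finset.Ico b (2 * b)).filter (fun r => r % 3 = 2)).card : ℤ) = y2 at *
  have h0 : 9 * (y0 * x0) = (b - χ b) * (a - χ a) := by
    linear_combination (3 * x0) * B0 + (b - χ b) * A0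
  have h1 : 9 * (y1 * x1) = (b + 2 * χ b) * (a + 2 * χ a) := by
    linear_combination (3 * x1) * B1 + (b + 2 * χ b) * A1
  have h2 : 9 * (y2 * x2) = (b - χ b) * (a - χ a) := by
    linear_combination (3 * x2) * B2 + (b - χ b) * A2
  linarith

/-- With `k = ⌊3abx⌋`, the number `k / b` is `⌊3ax⌋`, whose residue modulo `3` says in which third
of the unit interval the fractional part of `ax` lies. -/
lemma fract_mem_middle_iff {a b k : ℕ} (hb : 0 < b) {x : ℝ}
    (h1 : (k : ℝ) ≤ 3 * a * b * x) (h2 : 3 * a * b * x < k + 1) :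
    Int.fract (a * x) ∈ Set.Ico (1/3 : ℝ) (2/3 : ℝ) ↔ k / b % 3 = 1 := by
  have hb' : (0 : ℝ) < b := by exact_mod_cast hb
  have hq : b * (k / b) + k % b = k := Nat.div_add_mod k b
  have hr : k % b < b := Nat.mod_lt _ hb
  set q := k / b
  have hlo : (q : ℝ) ≤ 3 * (a * x) := by
    have : ((b * q : ℕ) : ℝ) ≤ k := by exact_mod_cast (by omega)
    push_cast at this
    nlinarith
  have hhi : 3 * (a * x) < q + 1 := by
    have : ((k + 1 : ℕ) : ℝ) ≤ (b * q + b : ℕ) := by exact_mod_cast (by omega)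
    push_cast at this
    nlinarith
  have hf : ⌊a * x⌋ = ((q / 3 : ℕ) : ℤ) := by
    rw [Int.floor_eq_iff, Int.cast_natCast]
    have e1 : ((3 * (q / 3) : ℕ) : ℝ) ≤ q := by exact_mod_cast (by omega)
    have e2 : ((q + 1 : ℕ) : ℝ) ≤ (3 * (q / 3) + 3 : ℕ) := by exact_mod_cast (by omega)
    rw [Nat.cast_mul] at e1
    rw [Nat.cast_add, Nat.cast_add, Nat.cast_mul] at e2
    norm_num only [Nat.cast_ofNat, Nat.cast_one] at e1 e2
    constructor <;> linarith
  have hq3 : (q : ℝ) = 3 * ((q / 3 : ℕ) : ℝ) + ((q % 3 : ℕ) : ℝ) := by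
    exact_mod_cast (Nat.div_add_mod q 3).symm
  rw [Int.fract, hf, Int.cast_natCast, Set.mem_Ico]
  have h3 : q % 3 = 0 ∨ q % 3 = 1 ∨ q % 3 = 2 := by omega
  rcases h3 with h | h | h <;> rw [h] at hq3 ⊢ <;> push_cast at hq3
  · constructor
    · rintro ⟨u, v⟩; linarith
    · intro u; omega
  · constructor
    · intro _; rfl
    · intro _; constructor <;> linarith
  · constructor
    · rintro ⟨u, v⟩; linarith
    · intro u; omega

theorem two_element_measure (a b : ℕ) (ha : 0 < a) (hb : 0 < b)
    (hab : Nat.Coprime a b) :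
    MeasureTheory.volume {x : ℝ | x ∈ Set.Ico (0:ℝ) 1 ∧
        Int.fract (a * x) ∈ Set.Ico (1/3 : ℝ) (2/3 : ℝ) ∧
        Int.fract (b * x) ∈ Set.Ico (1/3 : ℝ) (2/3 : ℝ)} =
      ENNReal.ofReal ((1/9 : ℝ) * (1 + 2 * (χ ((a : ℤ) * b) : ℝ) / ((a : ℝ) * b))) := by
  have ha' : (0 : ℝ) < a := by exact_mod_cast ha
  have hb' : (0 : ℝ) < b := by exact_mod_cast hb
  have hN : (0 : ℝ) < 3 * a * b := by positivity
  have mem_cell (k : ℕ) (x : ℝ) :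
      x ∈ Set.Ico ((k : ℝ) / (3 * a * b)) ((k + 1) / (3 * a * b)) ↔
        (k : ℝ) ≤ 3 * a * b * x ∧ 3 * a * b * x < k + 1 := by
    rw [Set.mem_Ico, div_le_iff₀ hN, lt_div_iff₀ hN, mul_comm x]
  have hset : {x : ℝ | x ∈ Set.Ico (0:ℝ) 1 ∧
        Int.fract (a * x) ∈ Set.Ico (1/3 : ℝ) (2/3 : ℝ) ∧
        Int.fract (b * x) ∈ Set.Ico (1/3 : ℝ) (2/3 : ℝ)} =
      ⋃ k ∈ goodIndices a b, Set.Ico ((k : ℝ) / (3 * a * b)) ((k + 1) / (3 * a * b)) := by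
    ext x
    simp only [Set.mem_iUnion, mem_cell, exists_prop, Set.mem_ofPred_eq, goodIndices,
      Finset.mem_filter, Finset.mem_range]
    have swap : 3 * (b : ℝ) * a * x = 3 * a * b * x := by ring
    constructor
    · rintro ⟨⟨h0, h1⟩, hA, hB⟩
      have hnn : 0 ≤ 3 * (a : ℝ) * b * x := by positivity
      have k1 := Nat.floor_le hnn
      have k2 := Nat.lt_floor_add_one (3 * (a : ℝ) * b * x)
      refine ⟨⌊3 * (a : ℝ) * b * x⌋₊, ⟨?_, ?_, ?_⟩, k1, k2⟩
      · rw [Nat.floor_lt hnn]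
        push_cast
        nlinarith
      · exact (fract_mem_middle_iff hb k1 k2).mp hA
      · exact (fract_mem_middle_iff ha (by rwa [swap]) (by rwa [swap])).mp hB
    · rintro ⟨k, ⟨hk, hA, hB⟩, k1, k2⟩
      refine ⟨⟨?_, ?_⟩, (fract_mem_middle_iff hb k1 k2).mpr hA,
        (fract_mem_middle_iff ha (by rwa [swap]) (by rwa [swap])).mpr hB⟩
      · have : (0 : ℝ) ≤ k := Nat.cast_nonneg k
        exact nonneg_of_mul_nonneg_right (this.trans k1) hN
      · have : ((k + 1 : ℕ) : ℝ) ≤ (3 * a * b : ℕ) := by exact_mod_cast hk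
        push_cast at this
        exact lt_of_mul_lt_mul_left (by linarith) hN.le
  have hdisj : Set.PairwiseDisjoint (goodIndices a b : Set ℕ)
      (fun k : ℕ => Set.Ico ((k : ℝ) / (3 * a * b)) ((k + 1) / (3 * a * b))) := by
    intro k _ l _ hkl
    refine Set.disjoint_left.mpr fun x hx hy => hkl ?_
    rw [mem_cell] at hx hy
    have h1 : (k : ℝ) < (l + 1 : ℕ) := by push_cast; linarith
    have h2 : (l : ℝ) < (k + 1 : ℕ) := by push_cast; linarith
    rw [Nat.cast_lt] at h1 h2
    omega
  have hcard : 3 * ((goodIndices a b).card : ℝ) = a * b + 2 * (χ ((a : ℤ) * b) : ℝ) := by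
    exact_mod_cast three_mul_card_goodIndices ha hb hab
  have hlen (k : ℕ) : ((k : ℝ) + 1) / (3 * a * b) - k / (3 * a * b) = 1 / (3 * a * b) := by ring
  rw [hset, MeasureTheory.measure_biUnion_finset hdisj fun _ _ => measurableSet_Ico]
  simp only [Real.volume_Ico, hlen, Finset.sum_const]
  rw [← ENNReal.ofReal_nsmul, nsmul_eq_mul]
  congr 1
  field_simp
  linarith
end

section
/- Let A be a set of eight positive integers. Then there exists x ∈ ℝ with f_A(x) > 1/3. -/
open Real intervalIntegral

/-! ### Fourier coefficients -/

/-- The non-principal Dirichlet character modulo `3`, with real values. -/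
def chi (k : ℕ) : ℝ := if k % 3 = 1 then 1 else if k % 3 = 2 then -1 else 0

/-- The constant `3√3 / (2π) ≈ 0.827`, which is the integral of `-3 f(x) cos(2πx)` over a period. -/
noncomputable def kap : ℝ := 3 * √3 / (2 * π)

/-- `hh a n = χ(n/a) / (n/a)` if `a ∣ n`, and `0` otherwise: up to the factor `kap`, the `n`-th
cosine coefficient of `x ↦ -3 f (a x)` for positive `a` and `n`. -/
noncomputable def hh (a n : ℕ) : ℝ := if a ∣ n then chi (n / a) / (n / a : ℕ) else 0

/-- The `n`-th cosine coefficient of `1 - 3 f_A`. -/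
noncomputable def cc (A : Finset ℕ) (n : ℕ) : ℝ :=
  ∫ x in (0 : ℝ)..1, (1 - 3 * fA A x) * cos (2 * π * n * x)

lemma f_periodic : Function.Periodic f 1 := by
  intro x
  simp [f]

lemma f_measurable : Measurable f := by
  unfold f
  exact Measurable.ite (measurable_fract measurableSet_Ico) measurable_const measurable_const

lemma f_abs_le (x : ℝ) : |f x| ≤ 1 := by
  unfold f
  split_ifs <;> rw [abs_le] <;> norm_num

lemma f_comp_intervalIntegrable (a s t : ℝ) :
    IntervalIntegrable (fun x => f (a * x)) MeasureTheory.volume s t := by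
  rw [intervalIntegrable_iff]
  refine MeasureTheory.Measure.integrableOn_of_bounded (M := 1) ?_ ?_ ?_
  · simp
  · exact (f_measurable.comp (measurable_const_mul a)).aestronglyMeasurable
  · exact Filter.Eventually.of_forall fun x => f_abs_le _

lemma fA_intervalIntegrable (A : Finset ℕ) (s t : ℝ) :
    IntervalIntegrable (fA A) MeasureTheory.volume s t := by
  have h : fA A = ∑ a ∈ A, fun x => f ((a : ℝ) * x) := by
    ext x
    simp [fA]
  rw [h]
  exact IntervalIntegrable.sum A fun a _ => f_comp_intervalIntegrable _ _ _

/-- The numerator of the `k`-th cosine coefficient of the indicator of `[1/3, 2/3)`. -/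
lemma sin_sub_sin_eq_chi (k : ℕ) :
    sin (2 * π * k * (2 / 3)) - sin (2 * π * k * (1 / 3)) = -√3 * chi k := by
  have h1 : sin (π / 3 + π) = -(√3 / 2) := by rw [sin_add_pi, sin_pi_div_three]
  have h2 : sin (π - π / 3) = √3 / 2 := by rw [sin_pi_sub, sin_pi_div_three]
  obtain ⟨q, r, hr, rfl⟩ : ∃ q r : ℕ, r < 3 ∧ k = r + 3 * q :=
    ⟨k / 3, k % 3, Nat.mod_lt _ (by norm_num), by omega⟩
  have e1 : 2 * π * ((r + 3 * q : ℕ) : ℝ) * (2 / 3)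
      = 4 * π * r / 3 + (2 * q : ℕ) * (2 * π) := by push_cast; ring
  have e2 : 2 * π * ((r + 3 * q : ℕ) : ℝ) * (1 / 3)
      = 2 * π * r / 3 + q * (2 * π) := by push_cast; ring
  rw [e1, e2, sin_add_nat_mul_two_pi, sin_add_nat_mul_two_pi]
  interval_cases r
  · simp [chi]
  · rw [show 4 * π * ((1 : ℕ) : ℝ) / 3 = π / 3 + π by push_cast; ring,
      show 2 * π * ((1 : ℕ) : ℝ) / 3 = π - π / 3 by push_cast; ring, h1, h2]
    simp [chi]; ring
  · rw [show 4 * π * ((2 : ℕ) : ℝ) / 3 = π - π / 3 + 2 * π by push_cast; ring,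
      show 2 * π * ((2 : ℕ) : ℝ) / 3 = π / 3 + π by push_cast; ring, sin_add_two_pi, h1, h2]
    simp [chi]

lemma integral_f_mul {g : ℝ → ℝ} (hg : Continuous g) :
    ∫ x in (0 : ℝ)..1, f x * g x
      = (∫ x in (1 / 3 : ℝ)..(2 / 3), g x) - 1 / 3 * ∫ x in (0 : ℝ)..1, g x := by
  have hi : ∀ s t, IntervalIntegrable (fun x => f x * g x) MeasureTheory.volume s t := by
    intro s t
    have := f_comp_intervalIntegrable 1 s t
    simp only [one_mul] at this
    exact this.mul_continuousOn hg.continuousOn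
  have gi : ∀ s t, IntervalIntegrable g MeasureTheory.volume s t :=
    fun s t => hg.intervalIntegrable s t
  have fr : ∀ x : ℝ, 0 < x → x < 1 → Int.fract x = x :=
    fun x h0 h1 => Int.fract_eq_self.2 ⟨h0.le, h1⟩
  rw [← integral_add_adjacent_intervals (hi 0 (1 / 3)) (hi (1 / 3) 1),
    ← integral_add_adjacent_intervals (hi (1 / 3) (2 / 3)) (hi (2 / 3) 1),
    ← integral_add_adjacent_intervals (gi 0 (1 / 3)) (gi (1 / 3) 1),
    ← integral_add_adjacent_intervals (gi (1 / 3) (2 / 3)) (gi (2 / 3) 1)]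
  have h1 : ∫ x in (0 : ℝ)..(1 / 3), f x * g x = ∫ x in (0 : ℝ)..(1 / 3), (-1 / 3) * g x := by
    refine integral_congr_Ioo_of_le (by norm_num) fun x hx => ?_
    have : f x = -1 / 3 := by
      unfold f
      rw [if_neg]
      rw [fr x hx.1 (by linarith [hx.2])]
      exact fun h => absurd h.1 (not_le.2 hx.2)
    simp only [this]
  have h2 : ∫ x in (1 / 3 : ℝ)..(2 / 3), f x * g x
      = ∫ x in (1 / 3 : ℝ)..(2 / 3), (2 / 3) * g x := by
    refine integral_congr_Ioo_of_le (by norm_num) fun x hx => ?_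
    have : f x = 2 / 3 := by
      unfold f
      rw [if_pos]
      rw [fr x (by linarith [hx.1]) (by linarith [hx.2])]
      exact ⟨hx.1.le, hx.2⟩
    simp only [this]
  have h3 : ∫ x in (2 / 3 : ℝ)..1, f x * g x = ∫ x in (2 / 3 : ℝ)..1, (-1 / 3) * g x := by
    refine integral_congr_Ioo_of_le (by norm_num) fun x hx => ?_
    have : f x = -1 / 3 := by
      unfold f
      rw [if_neg]
      rw [fr x (by linarith [hx.1]) hx.2]
      exact fun h => absurd h.2 (not_lt.2 hx.1.le)
    simp only [this]
  rw [h1, h2, h3, integral_const_mul, integral_const_mul, integral_const_mul]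
  ring

lemma integral_cos_two_pi {k : ℕ} (hk : 0 < k) (s t : ℝ) :
    ∫ x in s..t, cos (2 * π * k * x)
      = (sin (2 * π * k * t) - sin (2 * π * k * s)) / (2 * π * k) := by
  have : (2 * π * k : ℝ) ≠ 0 := by positivity
  rw [integral_comp_mul_left (fun x => cos x) this, integral_cos, smul_eq_mul]
  field_simp

lemma integral_cos_two_pi_unit {k : ℕ} (hk : 0 < k) :
    ∫ x in (0 : ℝ)..1, cos (2 * π * k * x) = 0 := by
  rw [integral_cos_two_pi hk, show 2 * π * (k : ℝ) * 1 = k * (2 * π) by ring]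
  have := sin_nat_mul_pi (2 * k)
  rw [show ((2 * k : ℕ) : ℝ) * π = k * (2 * π) by push_cast; ring] at this
  simp [this]

/-- The cosine coefficients of `f`. -/
lemma integral_f_mul_cos {k : ℕ} (hk : 0 < k) :
    ∫ x in (0 : ℝ)..1, f x * cos (2 * π * k * x) = -(kap / 3) * (chi k / k) := by
  rw [integral_f_mul (by fun_prop), integral_cos_two_pi_unit hk, integral_cos_two_pi hk,
    sin_sub_sin_eq_chi]
  have : (k : ℝ) ≠ 0 := by positivity
  unfold kap
  field_simp
  ring

lemma integral_f : ∫ x in (0 : ℝ)..1, f x = 0 := by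
  have := integral_f_mul (g := fun _ => 1) continuous_const
  simp only [mul_one] at this
  rw [this]
  norm_num

/-- Passing from `x` to `a x` does not change the integral of a `1`-periodic function. -/
lemma integral_comp_nat_mul {g : ℝ → ℝ} (hg : Function.Periodic g 1)
    (hi : ∀ s t, IntervalIntegrable g MeasureTheory.volume s t) {a : ℕ} (ha : 0 < a) :
    ∫ x in (0 : ℝ)..1, g (a * x) = ∫ x in (0 : ℝ)..1, g x := by
  have ha' : (a : ℝ) ≠ 0 := by positivity
  have := hg.intervalIntegral_add_zsmul_eq a 0 hi
  rw [integral_comp_mul_left g ha']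
  simp only [zero_add, zsmul_eq_mul, Int.cast_natCast, mul_one, mul_zero, smul_eq_mul] at this ⊢
  rw [this]
  field_simp

/-- If `a ∤ n`, then `x ↦ f (a x)` is orthogonal to the frequency `n`, because it is invariant under
translation by `1 / a`, whereas that translation rotates the frequency `n` by a non-trivial angle. -/
lemma integral_f_mul_cos_of_not_dvd {a n : ℕ} (ha : 0 < a) (h : ¬ a ∣ n) :
    ∫ x in (0 : ℝ)..1, f (a * x) * cos (2 * π * n * x) = 0 := by
  have ha' : (a : ℝ) ≠ 0 := by positivity
  set φ : ℝ := 2 * π * n / a with hφ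
  have hc : cos φ ≠ 1 := by
    rw [Ne, cos_eq_one_iff]
    rintro ⟨j, hj⟩
    apply h
    rw [hφ] at hj
    field_simp at hj
    have : (j : ℤ) * a = n := by exact_mod_cast (by linarith : (j : ℝ) * a = n)
    exact Int.natCast_dvd_natCast.1 ⟨j, by rw [← this]; ring⟩
  have ic : ∀ {g : ℝ → ℝ}, Continuous g → ∀ s t, IntervalIntegrable (fun x => f (a * x) * g x)
      MeasureTheory.volume s t := fun hg s t =>
    (f_comp_intervalIntegrable _ s t).mul_continuousOn hg.continuousOn
  have hfa : ∀ x : ℝ, f (a * (x + 1 / a)) = f (a * x) := fun x => by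
    rw [mul_add, mul_one_div_cancel ha', f_periodic]
  have hfa1 : ∀ x : ℝ, f (a * (x + 1)) = f (a * x) := fun x => by
    rw [mul_add, mul_one]
    simpa using f_periodic.nat_mul a (a * x)
  have shift : ∀ {g : ℝ → ℝ}, Function.Periodic g 1 →
      ∫ x in (0 : ℝ)..1, f (a * x) * g x = ∫ x in (0 : ℝ)..1, f (a * x) * g (x + 1 / a) := by
    intro g hg
    have hp : Function.Periodic (fun x => f (a * x) * g x) 1 := fun x => by
      simp only [hfa1, hg x]
    have h1 := hp.intervalIntegral_add_eq 0 (1 / a)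
    have h2 := integral_comp_add_right (a := 0) (b := 1)
      (fun x => f (a * x) * g x) (1 / (a : ℝ))
    simp only [hfa] at h2
    rw [h2, zero_add, add_comm 1 (1 / (a : ℝ)), ← h1, zero_add]
  have pc : Function.Periodic (fun x => cos (2 * π * n * x)) 1 := fun x => by
    simp only
    rw [show 2 * π * (n : ℝ) * (x + 1) = 2 * π * n * x + n * (2 * π) by ring,
      cos_add_nat_mul_two_pi]
  have ps : Function.Periodic (fun x => sin (2 * π * n * x)) 1 := fun x => by
    simp only
    rw [show 2 * π * (n : ℝ) * (x + 1) = 2 * π * n * x + n * (2 * π) by ring,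
      sin_add_nat_mul_two_pi]
  have ang : ∀ x : ℝ, 2 * π * n * (x + 1 / a) = 2 * π * n * x + φ := fun x => by
    rw [hφ]; ring
  have e1 := shift pc
  have e2 := shift ps
  simp only [ang, cos_add, sin_add] at e1 e2
  have c1 := ic (g := fun x => cos (2 * π * n * x)) (by fun_prop) 0 1
  have s1 := ic (g := fun x => sin (2 * π * n * x)) (by fun_prop) 0 1
  rw [show (fun x : ℝ => f (a * x) * (cos (2 * π * n * x) * cos φ - sin (2 * π * n * x) * sin φ))
    = fun x => cos φ * (f (a * x) * cos (2 * π * n * x))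
      - sin φ * (f (a * x) * sin (2 * π * n * x)) by ext x; ring,
    integral_sub (c1.const_mul _) (s1.const_mul _), integral_const_mul, integral_const_mul] at e1
  rw [show (fun x : ℝ => f (a * x) * (sin (2 * π * n * x) * cos φ + cos (2 * π * n * x) * sin φ))
    = fun x => cos φ * (f (a * x) * sin (2 * π * n * x))
      + sin φ * (f (a * x) * cos (2 * π * n * x)) by ext x; ring,
    integral_add (s1.const_mul _) (c1.const_mul _), integral_const_mul, integral_const_mul] at e2
  set I := ∫ x in (0 : ℝ)..1, f (a * x) * cos (2 * π * n * x)
  set S := ∫ x in (0 : ℝ)..1, f (a * x) * sin (2 * π * n * x)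
  have key : (2 * (1 - cos φ)) * I = 0 := by
    linear_combination (1 - cos φ) * e1 - sin φ * e2 - I * sin_sq_add_cos_sq φ
  rcases mul_eq_zero.1 key with h0 | h0
  · exact absurd (by linarith) hc
  · exact h0

lemma integral_f_comp_mul_cos {a n : ℕ} (ha : 0 < a) (hn : 0 < n) :
    ∫ x in (0 : ℝ)..1, f (a * x) * cos (2 * π * n * x) = -(kap / 3) * hh a n := by
  unfold hh
  split_ifs with h
  · obtain ⟨k, rfl⟩ := h
    have hk : 0 < k := Nat.pos_of_mul_pos_left hn
    rw [Nat.mul_div_cancel_left k ha, ← integral_f_mul_cos hk,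
      ← integral_comp_nat_mul (g := fun x => f x * cos (2 * π * k * x)) _ _ ha]
    · refine integral_congr fun x _ => ?_
      congr 2
      push_cast
      ring
    · intro x
      beta_reduce
      rw [f_periodic, show 2 * π * (k : ℝ) * (x + 1) = 2 * π * k * x + k * (2 * π) by ring,
        cos_add_nat_mul_two_pi]
    · intro s t
      have := f_comp_intervalIntegrable 1 s t
      simp only [one_mul] at this
      exact this.mul_continuousOn (by fun_prop)
  · rw [integral_f_mul_cos_of_not_dvd ha h, mul_zero]

lemma cc_zero {A : Finset ℕ} (hpos : ∀ a ∈ A, 0 < a) : cc A 0 = 1 := by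
  unfold cc
  simp only [Nat.cast_zero, mul_zero, zero_mul, cos_zero, mul_one]
  rw [integral_sub (by simp) ((fA_intervalIntegrable A 0 1).const_mul 3), integral_const_mul]
  have : ∫ x in (0 : ℝ)..1, fA A x = 0 := by
    unfold fA
    rw [integral_finsetSum fun a _ => f_comp_intervalIntegrable _ _ _]
    refine Finset.sum_eq_zero fun a ha => ?_
    rw [integral_comp_nat_mul f_periodic _ (hpos a ha), integral_f]
    intro s t
    simpa using f_comp_intervalIntegrable 1 s t
  rw [this]
  simp

/-- At a positive frequency only the elements of `A` dividing `n` contribute to `cc A n`. -/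
lemma cc_pos {A : Finset ℕ} (hpos : ∀ a ∈ A, 0 < a) {n : ℕ} (hn : 0 < n) :
    cc A n = kap * ∑ a ∈ A, hh a n := by
  unfold cc
  have h1 : ∀ x : ℝ, (1 - 3 * fA A x) * cos (2 * π * n * x)
      = cos (2 * π * n * x) - 3 * ∑ a ∈ A, f (a * x) * cos (2 * π * n * x) := by
    intro x
    rw [← Finset.sum_mul]
    unfold fA
    ring
  have h2 : ∀ a ∈ A, IntervalIntegrable (fun x => f (a * x) * cos (2 * π * n * x))
      MeasureTheory.volume 0 1 := fun a _ =>
    (f_comp_intervalIntegrable _ _ _).mul_continuousOn (by fun_prop)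
  have h3 : IntervalIntegrable (fun x => ∑ a ∈ A, f (a * x) * cos (2 * π * n * x))
      MeasureTheory.volume 0 1 := by
    simpa [Finset.sum_fn] using IntervalIntegrable.sum A h2
  simp only [h1]
  rw [integral_sub (Continuous.intervalIntegrable (by fun_prop) _ _) (h3.const_mul 3),
    integral_const_mul, integral_finsetSum h2, integral_cos_two_pi_unit hn,
    Finset.sum_congr rfl fun a ha => integral_f_comp_mul_cos (hpos a ha) hn, ← Finset.mul_sum]
  ring

/-- Testing `1 - 3 f_A ≥ 0` against a non-negative cosine polynomial with four frequencies. -/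
lemma cc_nonneg {A : Finset ℕ} (hle : ∀ x, fA A x ≤ 1 / 3) (n : Fin 4 → ℕ) (t : Fin 4 → ℝ)
    (ht : ∀ x : ℝ, 0 ≤ ∑ i, t i * cos (n i * x)) : 0 ≤ ∑ i, t i * cc A (n i) := by
  have hi : ∀ i ∈ Finset.univ, IntervalIntegrable
      (fun x => t i * ((1 - 3 * fA A x) * cos (2 * π * n i * x))) MeasureTheory.volume 0 1 := by
    intro i _
    refine IntervalIntegrable.const_mul ?_ _
    refine IntervalIntegrable.mul_continuousOn ?_ (by fun_prop)
    exact IntervalIntegrable.sub (by simp) ((fA_intervalIntegrable A 0 1).const_mul 3)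
  have : ∑ i, t i * cc A (n i)
      = ∫ x in (0 : ℝ)..1, (1 - 3 * fA A x) * ∑ i, t i * cos (n i * (2 * π * x)) := by
    simp only [cc, ← integral_const_mul]
    rw [← integral_finsetSum hi]
    refine integral_congr fun x _ => ?_
    simp only [Finset.mul_sum]
    refine Finset.sum_congr rfl fun i _ => ?_
    rw [show 2 * π * (n i : ℝ) * x = n i * (2 * π * x) by ring]
    ring
  rw [this]
  refine integral_nonneg (by norm_num) fun x _ => mul_nonneg ?_ (ht _)
  linarith [hle x]

/-! ### Arithmetic of the coefficients -/

lemma kap_gt : 0.82 < kap := by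
  unfold kap
  have h3 : (1.73 : ℝ) < √3 := Real.lt_sqrt_of_sq_lt (by norm_num)
  have := pi_lt_d2
  rw [lt_div_iff₀ (by positivity)]
  linarith

lemma hh_self {a : ℕ} (ha : 0 < a) : hh a a = 1 := by
  simp [hh, chi, Nat.div_self ha]

lemma hh_of_lt {a n : ℕ} (hn : 0 < n) (h : n < a) : hh a n = 0 :=
  if_neg (Nat.not_dvd_of_pos_of_lt hn h)

/-- The `6`-periodic sequence `1, 1, 0, -1, -1, 0, …`. -/
def psi (k : ℕ) : ℝ :=
  if k % 6 = 1 ∨ k % 6 = 2 then 1 else if k % 6 = 4 ∨ k % 6 = 5 then -1 else 0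

lemma psi_ge (k : ℕ) : -1 ≤ psi k := by
  unfold psi; split_ifs <;> norm_num

lemma psi_le (k : ℕ) : psi k ≤ 1 := by
  unfold psi; split_ifs <;> norm_num

/-- The joint contribution of `m` and `2 m` at the frequency `m k`. -/
lemma hh_add_hh {m k : ℕ} (hm : 0 < m) (hk : 0 < k) :
    hh m (m * k) + hh (2 * m) (m * k) = psi k / k := by
  have hk' : (k : ℝ) ≠ 0 := by positivity
  have h1 : hh m (m * k) = chi k / k := by
    rw [hh, if_pos (dvd_mul_right m k), Nat.mul_div_cancel_left k hm]
  rw [h1]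
  rcases Nat.even_or_odd' k with ⟨j, rfl | rfl⟩
  · have hj : (j : ℝ) ≠ 0 := by
      rintro h
      simp [h] at hk'
    have h2 : hh (2 * m) (m * (2 * j)) = chi j / j := by
      rw [show m * (2 * j) = 2 * m * j by ring, hh, if_pos (dvd_mul_right _ _),
        Nat.mul_div_cancel_left j (by omega)]
    rw [h2]
    have : chi (2 * j) + 2 * chi j = psi (2 * j) := by
      unfold chi psi
      have : j % 3 = 0 ∨ j % 3 = 1 ∨ j % 3 = 2 := by omega
      rcases this with h | h | h
      · simp [show 2 * j % 3 = 0 by omega, show 2 * j % 6 = 0 by omega, h]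
      · simp [show 2 * j % 3 = 2 by omega, show 2 * j % 6 = 2 by omega, h]
        norm_num
      · simp [show 2 * j % 3 = 1 by omega, show 2 * j % 6 = 4 by omega, h]
        norm_num
    rw [← this]
    push_cast
    field_simp
  · have h2 : hh (2 * m) (m * (2 * j + 1)) = 0 := by
      refine if_neg fun h => ?_
      rw [mul_comm 2 m] at h
      have := Nat.dvd_of_mul_dvd_mul_left hm h
      omega
    have : chi (2 * j + 1) = psi (2 * j + 1) := by
      unfold chi psi
      have : j % 3 = 0 ∨ j % 3 = 1 ∨ j % 3 = 2 := by omega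
      rcases this with h | h | h
      · simp [show (2 * j + 1) % 3 = 1 by omega, show (2 * j + 1) % 6 = 1 by omega]
      · simp [show (2 * j + 1) % 3 = 0 by omega, show (2 * j + 1) % 6 = 3 by omega]
      · simp [show (2 * j + 1) % 3 = 2 by omega, show (2 * j + 1) % 6 = 5 by omega]
    rw [h2, this, add_zero]

lemma hh_add_hh_of_not_dvd {m n : ℕ} (h : ¬ m ∣ n) : hh m n + hh (2 * m) n = 0 := by
  rw [hh, hh, if_neg h, if_neg fun h' => h ((dvd_mul_left m 2).trans h'), add_zero]

/-! ### The three test polynomials -/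

/-- The test `(1 - cos mx)² ≥ 0`. -/
lemma test_two {A : Finset ℕ} (hle : ∀ x, fA A x ≤ 1 / 3) (m : ℕ) :
    0 ≤ 3 / 2 * cc A 0 - 2 * cc A m + 1 / 2 * cc A (2 * m) := by
  have := cc_nonneg hle ![0, m, 2 * m, 0] ![3 / 2, -2, 1 / 2, 0] fun x => by
    simp only [Fin.sum_univ_four, Matrix.cons_val]
    push_cast
    rw [show 2 * (m : ℝ) * x = 2 * (m * x) by ring, cos_two_mul]
    simp only [zero_mul, cos_zero]
    nlinarith [sq_nonneg (1 - cos (m * x))]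
  simp only [Fin.sum_univ_four, Matrix.cons_val] at this
  linarith

/-- The test `|1 - e(mx) + e(2mx) - e(3mx)|² / 2 ≥ 0`, where `e(y) = exp(iy)`. -/
lemma test_three {A : Finset ℕ} (hle : ∀ x, fA A x ≤ 1 / 3) (m : ℕ) :
    0 ≤ 2 * cc A 0 - 3 * cc A m + 2 * cc A (2 * m) - cc A (3 * m) := by
  have := cc_nonneg hle ![0, m, 2 * m, 3 * m] ![2, -3, 2, -1] fun x => by
    simp only [Fin.sum_univ_four, Matrix.cons_val]
    push_cast
    rw [show 2 * (m : ℝ) * x = 2 * (m * x) by ring, show 3 * (m : ℝ) * x = 3 * (m * x) by ring,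
      cos_two_mul, cos_three_mul]
    simp only [zero_mul, cos_zero]
    nlinarith [mul_nonneg (sq_nonneg (cos (m * x))) (sub_nonneg.2 (cos_le_one (m * x)))]
  simp only [Fin.sum_univ_four, Matrix.cons_val] at this
  linarith

/-- The test `|1 - (4/5) e(mx) - (4/5) e(bx)|² ≥ 0`, where `e(y) = exp(iy)`. The factor `4/5` is
close to the optimal one, which is `kap` when `m ∤ b`. -/
lemma test_pair {A : Finset ℕ} (hle : ∀ x, fA A x ≤ 1 / 3) {m b : ℕ} (hmb : m ≤ b) :
    0 ≤ 57 / 25 * cc A 0 - 8 / 5 * cc A m - 8 / 5 * cc A b + 32 / 25 * cc A (b - m) := by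
  have := cc_nonneg hle ![0, m, b, b - m] ![57 / 25, -(8 / 5), -(8 / 5), 32 / 25] fun x => by
    simp only [Fin.sum_univ_four, Matrix.cons_val]
    push_cast [hmb]
    rw [sub_mul, cos_sub]
    simp only [zero_mul, cos_zero]
    have h1 := sin_sq_add_cos_sq (m * x)
    have h2 := sin_sq_add_cos_sq (b * x)
    nlinarith [sq_nonneg (1 - 4 / 5 * cos (m * x) - 4 / 5 * cos (b * x)),
      sq_nonneg (4 / 5 * sin (m * x) + 4 / 5 * sin (b * x))]
  simp only [Fin.sum_univ_four, Matrix.cons_val] at this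
  linarith

/-! ### Locating the smallest elements of `A` -/

/-- If `f_A ≤ 1/3` and `m` is the least element of `A`, then `2 m ∈ A`: otherwise the coefficients at
`m` and `2 m` are `kap` and `-kap / 2`, which `test_two` excludes. -/
lemma two_mul_mem {A : Finset ℕ} (hpos : ∀ a ∈ A, 0 < a) (hle : ∀ x, fA A x ≤ 1 / 3) {m : ℕ}
    (hm : m ∈ A) (hmin : ∀ a ∈ A, m ≤ a) : 2 * m ∈ A := by
  by_contra h2
  have m0 := hpos m hm
  have key := test_two hle m
  rw [cc_zero hpos, cc_pos hpos m0, cc_pos hpos (by omega : 0 < 2 * m),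
    Finset.sum_eq_single m, Finset.sum_eq_single m, hh_self m0] at key
  · have : hh m (2 * m) = -1 / 2 := by
      rw [hh, if_pos (dvd_mul_left m 2), Nat.mul_div_cancel _ m0]
      norm_num [chi]
    rw [this] at key
    linarith [kap_gt]
  · intro a ha ham
    refine if_neg ?_
    rintro ⟨c, hc⟩
    have hlt : m < a := lt_of_le_of_ne (hmin a ha) (Ne.symm ham)
    have : c = 1 := by
      have : c < 2 := by
        by_contra! hc2
        nlinarith
      have : c ≠ 0 := by
        rintro rfl
        omega
      omega
    subst this
    rw [mul_one] at hc
    exact h2 (hc ▸ ha)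
  · exact fun h => absurd hm h
  · exact fun a ha ham => hh_of_lt m0 (lt_of_le_of_ne (hmin a ha) (Ne.symm ham))
  · exact fun h => absurd hm h

theorem size_eight (A : Finset ℕ) (hcard : A.card = 8) (hpos : ∀ a ∈ A, 0 < a) :
    ∃ x : ℝ, 1/3 < fA A x := by
  by_contra! hle
  have hne : A.Nonempty := Finset.card_pos.1 (by omega)
  obtain ⟨m, hm, hmin⟩ : ∃ m ∈ A, ∀ a ∈ A, m ≤ a :=
    ⟨A.min' hne, A.min'_mem hne, fun a ha => A.min'_le a ha⟩
  have m0 := hpos m hm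
  have h2m := two_mul_mem hpos hle hm hmin
  have h2m' : 2 * m ∈ A.erase m := Finset.mem_erase.2 ⟨by omega, h2m⟩
  set B := (A.erase m).erase (2 * m) with hB
  have hBne : B.Nonempty := by
    apply Finset.card_pos.1
    rw [hB, Finset.card_erase_of_mem h2m', Finset.card_erase_of_mem hm]
    omega
  obtain ⟨b, hb, hbmin⟩ : ∃ b ∈ B, ∀ a ∈ B, b ≤ a :=
    ⟨B.min' hBne, B.min'_mem hBne, fun a ha => B.min'_le a ha⟩
  obtain ⟨hb2, hb1, hbA⟩ : b ≠ 2 * m ∧ b ≠ m ∧ b ∈ A := by simpa [hB] using hb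
  have hmb : m < b := lt_of_le_of_ne (hmin b hbA) (Ne.symm hb1)
  have split : ∀ n, 0 < n →
      cc A n = kap * (hh m n + hh (2 * m) n + ∑ a ∈ B, hh a n) := by
    intro n hn
    rw [cc_pos hpos hn, ← Finset.add_sum_erase A _ hm, ← Finset.add_sum_erase _ _ h2m', ← hB]
    ring
  -- Elements of `B` are at least `b`, so below the frequency `b` only `m` and `2 m` are visible.
  have c_lt : ∀ n, 0 < n → n < b → cc A n = kap * (hh m n + hh (2 * m) n) := by
    intro n hn hnb
    rw [split n hn, Finset.sum_eq_zero fun a ha => hh_of_lt hn (hnb.trans_le (hbmin a ha)),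
      add_zero]
  have c_b : cc A b = kap * (hh m b + hh (2 * m) b + 1) := by
    rw [split b (by omega), Finset.sum_eq_single b, hh_self (by omega)]
    · exact fun a ha hab => hh_of_lt (by omega) (lt_of_le_of_ne (hbmin a ha) (Ne.symm hab))
    · exact fun h => absurd hb h
  have c_0 := cc_zero hpos
  have c_m : cc A m = kap := by
    rw [c_lt m m0 hmb, hh_self m0, hh_of_lt m0 (by omega)]
    ring
  have hk := kap_gt
  have key := test_pair hle hmb.le
  rw [c_0, c_m, c_b, c_lt (b - m) (by omega) (by omega)] at key
  by_cases hdvd : m ∣ b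
  · obtain ⟨k, rfl⟩ := hdvd
    have hk3 : 3 ≤ k := by
      by_contra! h
      interval_cases k <;> omega
    rcases eq_or_lt_of_le hk3 with rfl | hk4
    -- For `b = 3 m` the pair test is not strong enough.
    · have key3 := test_three hle m
      have h2 := hh_add_hh m0 two_pos
      rw [mul_comm m 2] at h2
      rw [mul_comm 3 m, c_0, c_m, c_b, c_lt (2 * m) (by omega) (by omega), h2,
        hh_add_hh m0 three_pos] at key3
      norm_num [psi] at key3
      linarith
    · obtain ⟨j, rfl⟩ : ∃ j, k = j + 1 := ⟨k - 1, by omega⟩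
      have hsub : m * (j + 1) - m = m * j := by rw [mul_add, mul_one, Nat.add_sub_cancel]
      rw [hsub, hh_add_hh m0 (by omega), hh_add_hh m0 (by omega)] at key
      have hj0 : (0 : ℝ) < (j : ℝ) := by exact_mod_cast (by omega : 0 < j)
      have hj1 : (0 : ℝ) < ((j + 1 : ℕ) : ℝ) := by positivity
      -- `psi` vanishes or is negative at `3, 4, 5, 6`, so `psi j > 0` forces `j ≥ 7`.
      by_cases hj : 7 ≤ j
      · have h1 : psi j / j ≤ 1 / 7 := by
          rw [div_le_iff₀ hj0]
          have : (7 : ℝ) ≤ j := by exact_mod_cast hj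
          linarith [psi_le j]
        have h2 : -1 / 8 ≤ psi (j + 1) / (j + 1 : ℕ) := by
          rw [le_div_iff₀ hj1]
          have : (8 : ℝ) ≤ (j + 1 : ℕ) := by exact_mod_cast (by omega : 8 ≤ j + 1)
          linarith [psi_ge (j + 1)]
        nlinarith
      · have h1 : psi j / j ≤ 0 := by
          refine div_nonpos_of_nonpos_of_nonneg ?_ hj0.le
          have : 3 ≤ j := by omega
          interval_cases j <;> norm_num [psi]
        have h2 : -1 / 4 ≤ psi (j + 1) / (j + 1 : ℕ) := by
          rw [le_div_iff₀ hj1]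
          have : (4 : ℝ) ≤ (j + 1 : ℕ) := by exact_mod_cast (by omega : 4 ≤ j + 1)
          linarith [psi_ge (j + 1)]
        nlinarith
  · rw [hh_add_hh_of_not_dvd hdvd, hh_add_hh_of_not_dvd fun h => hdvd ?_] at key
    · linarith
    · exact (Nat.dvd_sub_iff_left hmb.le dvd_rfl).1 h
end

section
/- Let u, v, w be positive integers with u < v, v ≠ 2u and w > 2·u·v. Then there exists x ∈ ℝ such that {u·x} ∈ [1/3, 2/3), {v·x} ∈ [1/3, 2/3) and {w·x} ∈ [1/3, 2/3). -/
/-!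
The set of `x` for which `u * x` and `v * x` both have fractional part in `[1/3, 2/3)` is a union of
half-open intervals whose endpoints are integer multiples of `1 / (3uv)`. Hence, once it is
nonempty, it contains an interval `[A / (3uv), (A + 1) / (3uv))` with `A` an integer. Multiplication
by `w > 2uv` maps this to a half-open interval of length greater than `2/3`, and every such interval
meets `[1/3, 2/3) + ℤ`, whose gaps have length `2/3` (`exists_fract_mem`).

For nonemptiness (`exists_pair`): if `v < 2u`, take `x = 1 / (3u)`. If `v > 2u`, then as `x` runs
over `[1 / (3u), 2 / (3u))`, `v * x` runs over a half-open interval of length `v / (3u) > 2/3`.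
-/

theorem fract_mem_iff (y : ℝ) : Int.fract y ∈ Set.Ico (1/3 : ℝ) (2/3 : ℝ) ↔
    ∃ n : ℤ, (n : ℝ) + 1/3 ≤ y ∧ y < n + 2/3 := by
  constructor
  · rintro ⟨h1, h2⟩
    have := Int.floor_add_fract y
    exact ⟨⌊y⌋, by linarith, by linarith⟩
  · rintro ⟨n, h1, h2⟩
    have : ⌊y⌋ = n := Int.floor_eq_iff.2 ⟨by linarith, by linarith⟩
    have h := Int.floor_add_fract y
    rw [this] at h
    exact ⟨by linarith, by linarith⟩

theorem exists_fract_mem (p q : ℝ) (h : 2/3 < q - p) :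
    ∃ y, p ≤ y ∧ y < q ∧ Int.fract y ∈ Set.Ico (1/3 : ℝ) (2/3 : ℝ) := by
  simp only [fract_mem_iff]
  -- The first translate of `[1/3, 2/3)` that is not entirely to the left of `p`.
  have h1 := Int.floor_le (p + 1/3)
  have h2 := Int.lt_floor_add_one (p + 1/3)
  set n := ⌊p + 1/3⌋
  rcases le_total p (n + 1/3) with hp | hp
  · exact ⟨n + 1/3, hp, by linarith, n, le_rfl, by linarith⟩
  · exact ⟨p, le_rfl, by linarith, n, hp, by linarith⟩

theorem exists_pair (u v : ℕ) (hu : 0 < u) (huv : u < v) (hv : v ≠ 2 * u) :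
    ∃ x : ℝ, Int.fract (u * x) ∈ Set.Ico (1/3 : ℝ) (2/3 : ℝ) ∧
      Int.fract (v * x) ∈ Set.Ico (1/3 : ℝ) (2/3 : ℝ) := by
  have hu' : (0 : ℝ) < u := by exact_mod_cast hu
  have huv' : (u : ℝ) < v := by exact_mod_cast huv
  have hv' : (0 : ℝ) < v := hu'.trans huv'
  rcases lt_or_gt_of_ne hv with h | h
  · have h' : (v : ℝ) < 2 * u := by exact_mod_cast h
    refine ⟨1 / (3 * u), (fract_mem_iff _).2 ⟨0, ?_, ?_⟩, (fract_mem_iff _).2 ⟨0, ?_, ?_⟩⟩ <;>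
      push_cast <;> field_simp <;> linarith
  · have h' : 2 * (u : ℝ) < v := by exact_mod_cast h
    obtain ⟨y, h1, h2, h3⟩ := exists_fract_mem (v / (3 * u)) (2 * v / (3 * u)) (by
      field_simp; linarith)
    rw [div_le_iff₀ (by positivity)] at h1
    rw [lt_div_iff₀ (by positivity)] at h2
    refine ⟨y / v, (fract_mem_iff _).2 ⟨0, ?_, ?_⟩, ?_⟩
    · push_cast; field_simp; linarith
    · push_cast; field_simp; linarith
    · rwa [mul_div_cancel₀ _ hv'.ne']

theorem large_third_element (u v w : ℕ) (hu : 0 < u) (huv : u < v) (hv : v ≠ 2 * u)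
    (hw : 2 * u * v < w) :
    ∃ x : ℝ, Int.fract (u * x) ∈ Set.Ico (1/3 : ℝ) (2/3 : ℝ) ∧
      Int.fract (v * x) ∈ Set.Ico (1/3 : ℝ) (2/3 : ℝ) ∧
      Int.fract (w * x) ∈ Set.Ico (1/3 : ℝ) (2/3 : ℝ) := by
  have hu' : (0 : ℝ) < u := by exact_mod_cast hu
  have hv' : (0 : ℝ) < v := by exact_mod_cast hu.trans huv
  have hw' : 2 * (u : ℝ) * v < w := by exact_mod_cast hw
  have hw0 : (0 : ℝ) < w := lt_trans (by positivity) hw'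
  obtain ⟨x₀, h1, h2⟩ := exists_pair u v hu huv hv
  obtain ⟨m, m1, m2⟩ := (fract_mem_iff _).1 h1
  obtain ⟨n, n1, n2⟩ := (fract_mem_iff _).1 h2
  -- In the scaled variable `t = 3 * u * v * x` all endpoints are integers; `[A, A + 1)` is the
  -- leftmost unit interval of the component containing `3 * u * v * x₀`.
  obtain ⟨A, a1, a2, b1, b2⟩ : ∃ A : ℤ, (3 * m + 1) * v ≤ A ∧ (3 * n + 1) * u ≤ A ∧
      A + 1 ≤ (3 * m + 2) * v ∧ A + 1 ≤ (3 * n + 2) * u := by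
    have e1 : ((3 * m + 1) * v : ℝ) ≤ 3 * u * v * x₀ := by nlinarith
    have e2 : ((3 * n + 1) * u : ℝ) ≤ 3 * u * v * x₀ := by nlinarith
    have e3 : 3 * u * v * x₀ < ((3 * m + 2) * v : ℝ) := by nlinarith
    have e4 : 3 * u * v * x₀ < ((3 * n + 2) * u : ℝ) := by nlinarith
    have c1 : (3 * m + 1) * (v : ℤ) < (3 * m + 2) * v := by exact_mod_cast e1.trans_lt e3
    have c2 : (3 * m + 1) * (v : ℤ) < (3 * n + 2) * u := by exact_mod_cast e1.trans_lt e4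
    have c3 : (3 * n + 1) * (u : ℤ) < (3 * m + 2) * v := by exact_mod_cast e2.trans_lt e3
    have c4 : (3 * n + 1) * (u : ℤ) < (3 * n + 2) * u := by exact_mod_cast e2.trans_lt e4
    exact ⟨max ((3 * m + 1) * v) ((3 * n + 1) * u), le_max_left _ _, le_max_right _ _,
      max_lt c1 c3, max_lt c2 c4⟩
  have a1' : ((3 * m + 1) * v : ℝ) ≤ A := by exact_mod_cast a1
  have a2' : ((3 * n + 1) * u : ℝ) ≤ A := by exact_mod_cast a2
  have b1' : (A + 1 : ℝ) ≤ (3 * m + 2) * v := by exact_mod_cast b1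
  have b2' : (A + 1 : ℝ) ≤ (3 * n + 2) * u := by exact_mod_cast b2
  obtain ⟨y, y1, y2, y3⟩ := exists_fract_mem (w * (A / (3 * u * v))) (w * ((A + 1) / (3 * u * v)))
    (by
      have : w * ((A + 1) / (3 * u * v)) - w * (A / (3 * u * v)) = (w : ℝ) / (3 * u * v) := by ring
      rw [this, lt_div_iff₀ (by positivity)]
      linarith)
  obtain ⟨x, rfl⟩ : ∃ x : ℝ, y = w * x := ⟨y / w, (mul_div_cancel₀ _ hw0.ne').symm⟩
  have x1 := le_of_mul_le_mul_left y1 hw0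
  have x2 := lt_of_mul_lt_mul_left y2 hw0.le
  rw [div_le_iff₀ (by positivity)] at x1
  rw [lt_div_iff₀ (by positivity)] at x2
  refine ⟨x, (fract_mem_iff _).2 ⟨m, ?_, ?_⟩, (fract_mem_iff _).2 ⟨n, ?_, ?_⟩, y3⟩
  · exact le_of_mul_le_mul_right (by linarith) hv'
  · exact lt_of_mul_lt_mul_right (by linarith) hv'.le
  · exact le_of_mul_le_mul_right (by linarith) hu'
  · exact lt_of_mul_lt_mul_right (by linarith) hu'.le
end

section
/- Let A = {u, v, w} be a set of three positive integers with u < v < w and gcd(u, v, w) = 1. Then m_A = 1 if and only if at least one of the following holds: w = u + v; there exists a ∈ A with 2a ∈ A; A = {1, 5, 8}; A = {2, 3, 10}. -/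
/-- `mA A = sup_{x ∈ ℝ} fA A x`. -/
noncomputable def mA (A : Finset ℕ) : ℝ := sSup (Set.range (fA A))

/-- `y` lies in the middle third `[1/3, 2/3)` modulo `1`. -/
def Good (y : ℝ) : Prop := ∃ z : ℤ, (z : ℝ) + 1/3 ≤ y ∧ y < z + 2/3

lemma good_iff (y : ℝ) : Int.fract y ∈ Set.Ico (1/3 : ℝ) (2/3 : ℝ) ↔ Good y := by
  constructor
  · rintro ⟨h1, h2⟩
    have := Int.floor_add_fract y
    exact ⟨⌊y⌋, by linarith, by linarith⟩
  · rintro ⟨z, h1, h2⟩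
    have hz : ⌊y⌋ = z := by
      rw [Int.floor_eq_iff]
      constructor <;> linarith
    have := Int.floor_add_fract y
    rw [hz] at this
    constructor <;> linarith

lemma f_good {y : ℝ} (h : Good y) : f y = 2/3 := by
  unfold f
  rw [if_pos ((good_iff y).2 h)]

lemma f_not_good {y : ℝ} (h : ¬ Good y) : f y = -1/3 := by
  unfold f
  rw [if_neg (fun h' => h ((good_iff y).1 h'))]

lemma good_of {a T D : ℤ} (z : ℤ) (hD : 0 < D) (h1 : D ≤ 3 * (a * T - z * D))
    (h2 : 3 * (a * T - z * D) < 2 * D) : Good ((a : ℝ) * ((T : ℝ) / (D : ℝ))) := by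
  have hD' : (0 : ℝ) < D := by exact_mod_cast hD
  have h1' : (D : ℝ) ≤ 3 * (a * T - z * D) := by exact_mod_cast h1
  have h2' : 3 * ((a : ℝ) * T - z * D) < 2 * D := by exact_mod_cast h2
  refine ⟨z, ?_, ?_⟩
  · rw [← mul_div_assoc, le_div_iff₀ hD']
    linarith
  · rw [← mul_div_assoc, div_lt_iff₀ hD']
    linarith

/-! ### Multiples of a residue and the middle third -/

lemma middle_large {N a : ℤ} (hN : 45 ≤ N) (ha : 0 < a) (haN : 2 * a ≤ N) (h2 : a ≠ 2)
    (h1 : 2 * a ≠ N - 1) :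
    ∃ j q : ℤ, N < 3 * j ∧ 3 * j < 2 * N ∧ N ≤ 3 * (a * j - q * N) ∧
      3 * (a * j - q * N) ≤ 2 * N := by
  rcases eq_or_ne a 1 with rfl | ha1
  · exact ⟨N / 2, 0, by omega, by omega, by omega, by omega⟩
  rcases eq_or_ne a 3 with rfl | ha3
  · exact ⟨4 * N / 9 + 1, 1, by omega, by omega, by omega, by omega⟩
  rcases le_or_gt (3 * a) N with h3 | h3
  · -- Here `q` is the least integer such that `(N/3 + q N) / a` exceeds `N / 3`, and `j` is the
    -- least integer with `a j ≥ N/3 + q N`.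
    obtain ⟨m, hm1, hm2⟩ : ∃ m : ℤ, a + 1 ≤ 1 + 3 * m ∧ 1 + 3 * m ≤ a + 3 :=
      ⟨(a - 1) / 3 + 1, by omega, by omega⟩
    have h3a : 0 < 3 * a := by omega
    have e1 := Int.emod_add_mul_ediv (-((1 + 3 * m) * N)) (3 * a)
    have e2 := Int.emod_nonneg (-((1 + 3 * m) * N)) h3a.ne'
    have e3 := Int.emod_lt_of_pos (-((1 + 3 * m) * N)) h3a
    set j := -(-((1 + 3 * m) * N) / (3 * a)) with hj
    have e4 : -((1 + 3 * m) * N) / (3 * a) = -j := by rw [hj]; ring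
    rw [e4] at e1
    set R := -((1 + 3 * m) * N) % (3 * a)
    have hlow : (a + 1) * N ≤ (1 + 3 * m) * N := by gcongr
    have hup : (1 + 3 * m) * N ≤ (a + 3) * N := by gcongr
    have h12 : (a - 3) * 12 ≤ (a - 3) * N := by
      apply mul_le_mul_of_nonneg_left <;> omega
    refine ⟨j, m, ?_, ?_, by linarith, by linarith⟩
    · refine lt_of_mul_lt_mul_left (a := a) ?_ ha.le
      linarith
    · refine lt_of_mul_lt_mul_left (a := a) ?_ ha.le
      have : 4 ≤ a := by omega
      linarith
  · -- Even `j = 2 i` give `a j ≡ -b i` modulo `N`.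
    obtain ⟨b, hb⟩ : ∃ b, b = N - 2 * a := ⟨_, rfl⟩
    have hN2 : N = 2 * a + b := by omega
    rcases eq_or_ne b 0 with h | hb0
    · subst h
      have hA : a * (2 * (N / 4) + 1) - N / 4 * N = a := by rw [hN2]; ring
      exact ⟨2 * (N / 4) + 1, N / 4, by omega, by omega, by omega, by omega⟩
    have key : ∀ i m : ℤ, a * (2 * i) - (i - m - 1) * N = N + m * N - b * i := by
      intro i m; rw [hN2]; ring
    have fin : ∀ i m : ℤ, N < 6 * i → 3 * i < N → N ≤ 3 * (b * i - m * N) →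
        3 * (b * i - m * N) ≤ 2 * N → ∃ j q : ℤ, N < 3 * j ∧ 3 * j < 2 * N ∧
          N ≤ 3 * (a * j - q * N) ∧ 3 * (a * j - q * N) ≤ 2 * N := by
      intro i m g1 g2 g3 g4
      have := key i m
      exact ⟨2 * i, i - m - 1, by linarith, by linarith, by linarith, by linarith⟩
    rcases eq_or_ne b 2 with h | hb2
    · subst h
      exact fin (N / 4) 0 (by omega) (by omega) (by omega) (by omega)
    rcases eq_or_ne b 3 with h | hb3
    · subst h
      exact fin (N / 6 + 1) 0 (by omega) (by omega) (by omega) (by omega)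
    rcases eq_or_ne b 4 with h | hb4
    · -- The even multiples fail here; an odd `j` near `N / 2` gives `a j` near `N / 2`.
      subst h
      have hA : a * (2 * (N / 4) + 1) - (N / 4 - 1) * N = N + a - 4 * (N / 4) := by
        generalize N / 4 = i
        rw [hN2]; ring
      exact ⟨2 * (N / 4) + 1, N / 4 - 1, by omega, by omega, by omega, by omega⟩
    rcases eq_or_ne b 5 with h | hb5
    · subst h
      exact fin (4 * N / 15 + 1) 1 (by omega) (by omega) (by omega) (by omega)
    rcases eq_or_ne b 6 with h | hb6
    · subst h
      exact fin (4 * N / 18 + 1) 1 (by omega) (by omega) (by omega) (by omega)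
    have hb7 : 7 ≤ b := by omega
    obtain ⟨m, hm1, hm2⟩ : ∃ m : ℤ, b + 1 ≤ 2 + 6 * m ∧ 2 + 6 * m ≤ b + 6 :=
      ⟨(b - 2) / 6 + 1, by omega, by omega⟩
    have h3b : 0 < 3 * b := by omega
    have e1 := Int.emod_add_mul_ediv (-((1 + 3 * m) * N)) (3 * b)
    have e2 := Int.emod_nonneg (-((1 + 3 * m) * N)) h3b.ne'
    have e3 := Int.emod_lt_of_pos (-((1 + 3 * m) * N)) h3b
    set i := -(-((1 + 3 * m) * N) / (3 * b)) with hi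
    have e4 : -((1 + 3 * m) * N) / (3 * b) = -i := by rw [hi]; ring
    rw [e4] at e1
    set R := -((1 + 3 * m) * N) % (3 * b)
    have hlow : (b + 1) * N ≤ (2 + 6 * m) * N := by gcongr
    have hup : (2 + 6 * m) * N ≤ (b + 6) * N := by gcongr
    have h12 : (b - 6) * 45 ≤ (b - 6) * N := by
      apply mul_le_mul_of_nonneg_left <;> omega
    refine fin i m ?_ ?_ (by linarith) (by linarith)
    · refine lt_of_mul_lt_mul_left (a := b) ?_ (by omega)
      linarith
    · refine lt_of_mul_lt_mul_left (a := b) ?_ (by omega)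
      linarith

lemma middle_small : ∀ N ∈ Finset.Ico 3 45, ∀ a ∈ Finset.range (N / 2 + 1),
    a ≠ 0 ∧ a ≠ 2 ∧ 2 * a ≠ N - 1 ∧ a + 2 ≠ N ∧ ¬ (N = 13 ∧ a = 5) →
    ∃ j ∈ Finset.range N, N < 3 * j ∧ 3 * j < 2 * N ∧ N ≤ 3 * (a * j % N) ∧ 3 * (a * j % N) ≤ 2 * N := by
  decide +kernel

/-- For `a` outside the classes `0, ±2, ±1/2` modulo `N` (and `±5` modulo `13`) some `j` has both
`j / N` in the open and `a j / N` in the closed middle third modulo `1`. -/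
lemma exists_middle {N a : ℤ} (hN : 3 ≤ N) (h0 : ¬ N ∣ a) (h2 : ¬ N ∣ a - 2) (h2' : ¬ N ∣ a + 2)
    (h1 : ¬ N ∣ 2 * a - 1) (h1' : ¬ N ∣ 2 * a + 1)
    (h13 : ¬ (N = 13 ∧ (13 ∣ a - 5 ∨ 13 ∣ a - 8))) :
    ∃ j q : ℤ, N < 3 * j ∧ 3 * j < 2 * N ∧ N ≤ 3 * (a * j - q * N) ∧
      3 * (a * j - q * N) ≤ 2 * N := by
  -- By the symmetry `a ↦ -a` only residues in `[0, N / 2]` have to be treated.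
  have half : ∀ b : ℤ, 0 ≤ b → 2 * b ≤ N → ¬ N ∣ b → ¬ N ∣ b - 2 → ¬ N ∣ b + 2 →
      ¬ N ∣ 2 * b + 1 → ¬ (N = 13 ∧ b = 5) →
      ∃ j q : ℤ, N < 3 * j ∧ 3 * j < 2 * N ∧ N ≤ 3 * (b * j - q * N) ∧
        3 * (b * j - q * N) ≤ 2 * N := by
    intro b hb hbN g0 g2 g2' g1 g13
    have k0 : b ≠ 0 := by rintro rfl; simp at g0
    have k2 : b ≠ 2 := by rintro rfl; simp at g2
    have k2' : b + 2 ≠ N := by rintro h; rw [h] at g2'; simp at g2'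
    have k1 : 2 * b ≠ N - 1 := by
      intro h
      rw [show 2 * b + 1 = N by omega] at g1
      simp at g1
    rcases le_or_gt 45 N with h | h
    · exact middle_large h (by omega) hbN k2 k1
    · lift N to ℕ using by omega
      lift b to ℕ using hb
      obtain ⟨j, -, q1, q2, q3, q4⟩ := middle_small N (by simp; omega) b (by simp; omega)
        ⟨by omega, by omega, by omega, by omega, by omega⟩
      have e : (b : ℤ) * j - ((b * j / N : ℕ) : ℤ) * N = ((b * j % N : ℕ) : ℤ) := by
        have := Nat.mod_add_div (b * j) N
        zify at this
        push_cast
        linarith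
      refine ⟨j, ((b * j / N : ℕ) : ℤ), by omega, by omega, ?_, ?_⟩ <;> rw [e] <;> omega
  have hNpos : 0 < N := by omega
  have e1 := Int.emod_add_mul_ediv a N
  have e2 := Int.emod_nonneg a hNpos.ne'
  have e3 := Int.emod_lt_of_pos a hNpos
  set r := a % N
  set c := a / N
  have hdvd : ∀ x y : ℤ, (∃ k, x = y + N * k) → ¬ N ∣ x → ¬ N ∣ y := by
    rintro x y ⟨k, rfl⟩ h h'
    exact h (dvd_add h' (dvd_mul_right _ _))
  have hdvd' : ∀ x y : ℤ, (∃ k, x = -y + N * k) → ¬ N ∣ x → ¬ N ∣ y := by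
    rintro x y ⟨k, rfl⟩ h h'
    exact h (dvd_add (dvd_neg.2 h') (dvd_mul_right _ _))
  rcases le_or_gt (2 * r) N with h | h
  · obtain ⟨j, q, q1, q2, q3, q4⟩ := half r e2 h (hdvd _ _ ⟨c, by linarith⟩ h0)
      (hdvd _ _ ⟨c, by linarith⟩ h2) (hdvd _ _ ⟨c, by linarith⟩ h2')
      (hdvd _ _ ⟨2 * c, by linarith⟩ h1') (by
        rintro ⟨rfl, hr⟩
        omega)
    have e : a * j - (q + c * j) * N = r * j - q * N := by rw [← e1]; ring
    exact ⟨j, q + c * j, q1, q2, by rw [e]; exact q3, by rw [e]; exact q4⟩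
  · obtain ⟨j, q, q1, q2, q3, q4⟩ := half (N - r) (by omega) (by omega)
      (hdvd' _ _ ⟨c + 1, by linarith⟩ h0)
      (hdvd' _ _ ⟨c + 1, by linarith⟩ h2') (hdvd' _ _ ⟨c + 1, by linarith⟩ h2)
      (hdvd' _ _ ⟨2 * c + 2, by linarith⟩ h1) (by
        rintro ⟨rfl, hr⟩
        omega)
    have e : a * j - (c * j + j - q - 1) * N = N - ((N - r) * j - q * N) := by rw [← e1]; ring
    exact ⟨j, c * j + j - q - 1, q1, q2, by rw [e]; linarith, by rw [e]; linarith⟩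

lemma outer_small : ∀ N ∈ Finset.Ico 4 10, ∀ a ∈ Finset.range N,
    a ≠ 1 ∧ a + 1 ≠ N ∧ ¬ (N = 6 ∧ a = 3) →
    ∃ j ∈ Finset.range N, N < 3 * j ∧ 3 * j < 2 * N ∧ (3 * (a * j % N) < N ∨ 2 * N ≤ 3 * (a * j % N)) := by
  decide +kernel

lemma outer_large {N a : ℤ} (hN : 10 ≤ N) (ha : 0 ≤ a) (haN : 2 * a ≤ N) (h1 : a ≠ 1) :
    ∃ j q : ℤ, N < 3 * j ∧ 3 * j < 2 * N ∧ -N < 3 * (a * j - q * N) ∧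
      3 * (a * j - q * N) < N := by
  rcases eq_or_ne a 0 with rfl | ha0
  · exact ⟨N / 2, 0, by omega, by omega, by omega, by omega⟩
  rcases eq_or_ne a 2 with rfl | ha2
  · exact ⟨N / 2, 1, by omega, by omega, by omega, by omega⟩
  rcases eq_or_ne a 3 with rfl | ha3
  · exact ⟨N / 3 + 1, 1, by omega, by omega, by omega, by omega⟩
  -- `j` is a nearest integer to `q N / a` with `q = ⌊a / 2⌋`, so `|a j - q N| ≤ a / 2 ≤ N / 4`.
  obtain ⟨m, hm1, hm2⟩ : ∃ m : ℤ, 2 * m ≤ a ∧ a ≤ 2 * m + 1 := ⟨a / 2, by omega, by omega⟩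
  have h2a : 0 < 2 * a := by omega
  have e1 := Int.emod_add_mul_ediv (2 * m * N + a) (2 * a)
  have e2 := Int.emod_nonneg (2 * m * N + a) h2a.ne'
  have e3 := Int.emod_lt_of_pos (2 * m * N + a) h2a
  set j := (2 * m * N + a) / (2 * a)
  set R := (2 * m * N + a) % (2 * a)
  have hup : 2 * m * N ≤ a * N := by gcongr
  -- `m / a ≥ 2 / 5` for `a ≥ 4`.
  have hm5 : 2 * a ≤ 5 * m := by omega
  have hlow : 2 * a * N ≤ 5 * m * N := by gcongr
  have h10 : a * 10 ≤ a * N := by gcongr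
  refine ⟨j, m, ?_, ?_, by linarith, by linarith⟩
  · refine lt_of_mul_lt_mul_left (a := a) ?_ (by omega)
    linarith
  · refine lt_of_mul_lt_mul_left (a := a) ?_ (by omega)
    linarith

/-- For `a ≢ ±1` modulo `N` (and `a ≢ 3` if `N = 6`) some `j` has `j / N` in the open middle third
and `a j / N` outside `[1/3, 2/3)` modulo `1`. -/
lemma exists_outer {N a : ℤ} (hN : 4 ≤ N) (h1 : ¬ N ∣ a - 1) (h1' : ¬ N ∣ a + 1)
    (h6 : ¬ (N = 6 ∧ 6 ∣ a - 3)) :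
    ∃ j q : ℤ, N < 3 * j ∧ 3 * j < 2 * N ∧ -N ≤ 3 * (a * j - q * N) ∧
      3 * (a * j - q * N) < N := by
  have hNpos : 0 < N := by omega
  have e1 := Int.emod_add_mul_ediv a N
  have e2 := Int.emod_nonneg a hNpos.ne'
  have e3 := Int.emod_lt_of_pos a hNpos
  set r := a % N
  set c := a / N
  have k1 : r ≠ 1 := by
    intro h
    exact h1 ⟨c, by linarith⟩
  have k1' : r + 1 ≠ N := by
    intro h
    exact h1' ⟨c + 1, by linarith⟩
  rcases le_or_gt 10 N with h | h
  · rcases le_or_gt (2 * r) N with h' | h'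
    · obtain ⟨j, q, q1, q2, q3, q4⟩ := outer_large h e2 h' k1
      have e : a * j - (q + c * j) * N = r * j - q * N := by rw [← e1]; ring
      exact ⟨j, q + c * j, q1, q2, by rw [e]; exact q3.le, by rw [e]; exact q4⟩
    · obtain ⟨j, q, q1, q2, q3, q4⟩ := outer_large (a := N - r) h (by omega) (by omega) (by omega)
      have e : a * j - (c * j + j - q) * N = - ((N - r) * j - q * N) := by rw [← e1]; ring
      exact ⟨j, c * j + j - q, q1, q2, by rw [e]; linarith, by rw [e]; linarith⟩
  · have k6 : ¬ (N = 6 ∧ r = 3) := by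
      rintro ⟨rfl, hr⟩
      omega
    lift N to ℕ using by omega
    clear_value r c
    lift r to ℕ using e2
    obtain ⟨j, -, q1, q2, q3⟩ := outer_small N (by simp; omega) r (by simp; omega)
      ⟨by omega, by omega, by omega⟩
    have hlt : r * j % N < N := Nat.mod_lt _ (by omega)
    have e : a * j - (((r * j / N : ℕ) : ℤ) + c * j) * N = ((r * j % N : ℕ) : ℤ) := by
      have := Nat.mod_add_div (r * j) N
      zify at this
      push_cast
      rw [← e1]
      linarith
    rcases q3 with q3 | q3
    · refine ⟨j, ((r * j / N : ℕ) : ℤ) + c * j, by omega, by omega, ?_, ?_⟩ <;> rw [e] <;> omega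
    · have e' : a * j - (((r * j / N : ℕ) : ℤ) + c * j + 1) * N = ((r * j % N : ℕ) : ℤ) - N := by
        rw [← e]; ring
      refine ⟨j, ((r * j / N : ℕ) : ℤ) + c * j + 1, by omega, by omega, ?_, ?_⟩ <;> rw [e'] <;>
        omega

/-! ### Points where two of the numbers are in the middle third -/

/-- At `x = (j t + N k) / (d N)` with `t` inverse to `v'` modulo `N = v' + w'`, the numbers `d v' x`
and `d w' x` are congruent to `j / N` and `-j / N` modulo `1`. -/
lemma pair_good {d v' w' N t s j : ℤ} (k : ℤ) (hd : 0 < d) (hN : N = v' + w') (hNpos : 0 < N)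
    (ht : t * v' = 1 + N * s) (h1 : N < 3 * j) (h2 : 3 * j < 2 * N) :
    Good (((d * v' : ℤ) : ℝ) * (((j * t + N * k : ℤ) : ℝ) / ((d * N : ℤ) : ℝ))) ∧
    Good (((d * w' : ℤ) : ℝ) * (((j * t + N * k : ℤ) : ℝ) / ((d * N : ℤ) : ℝ))) := by
  have hD : 0 < d * N := by positivity
  have hv : d * v' * (j * t + N * k) - (s * j + v' * k) * (d * N) = d * j := by
    linear_combination d * j * ht
  have hw : d * w' * (j * t + N * k) - (j * t + N * k - s * j - v' * k - 1) * (d * N)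
      = d * (N - j) := by
    have : w' = N - v' := by omega
    subst this
    linear_combination -d * j * ht
  constructor
  · refine good_of (s * j + v' * k) hD ?_ ?_ <;> rw [hv]
    · nlinarith
    · nlinarith
  · refine good_of (j * t + N * k - s * j - v' * k - 1) hD ?_ ?_ <;> rw [hw]
    · nlinarith
    · nlinarith

lemma exists_inverse_s12 {v w : ℤ} (h : IsCoprime v w) : ∃ t s : ℤ, t * v = 1 + (v + w) * s := by
  obtain ⟨p, q, hpq⟩ := h
  exact ⟨p - q, -q, by linear_combination hpq⟩

lemma exists_reduced {v w : ℤ} (hv : 0 < v) (hvw : v < w) :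
    ∃ d v' w' : ℤ, 0 < d ∧ 0 < v' ∧ v' < w' ∧ v = d * v' ∧ w = d * w' ∧ IsCoprime v' w' := by
  obtain ⟨v', w', hc, e1, e2⟩ := Int.exists_gcd_one (m := v) (n := w)
    (Int.gcd_pos_of_ne_zero_left _ hv.ne')
  have hd : 0 < (Int.gcd v w : ℤ) := by exact_mod_cast Int.gcd_pos_of_ne_zero_left _ hv.ne'
  refine ⟨Int.gcd v w, v', w', hd, ?_, ?_, by linarith, by linarith,
    Int.isCoprime_iff_gcd_eq_one.2 hc⟩
  · exact pos_of_mul_pos_left (e1 ▸ hv) hd.le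
  · refine lt_of_mul_lt_mul_right (a := (Int.gcd v w : ℤ)) ?_ hd.le
    linarith

lemma exists_interior {N : ℤ} (hN : 4 ≤ N) : ∃ j : ℤ, N < 3 * j ∧ 3 * j < 2 * N :=
  ⟨N / 2, by omega, by omega⟩

lemma reduced_sum {v' w' d : ℤ} (hv : 0 < v') (hvw : v' < w') (h : d * w' ≠ 2 * (d * v')) :
    4 ≤ v' + w' := by
  by_contra hlt
  have h1 : v' = 1 := by omega
  have h2 : w' = 2 := by omega
  subst h1 h2
  exact h (by ring)

lemma exists_pair_s12 {v w : ℤ} (hv : 0 < v) (hvw : v < w) (h : w ≠ 2 * v) :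
    ∃ x : ℝ, Good (v * x) ∧ Good (w * x) := by
  obtain ⟨d, v', w', hd, hv', hvw', rfl, rfl, hc⟩ := exists_reduced hv hvw
  obtain ⟨t, s, ht⟩ := exists_inverse_s12 hc
  have hN := reduced_sum hv' hvw' h
  obtain ⟨j, h1, h2⟩ := exists_interior hN
  exact ⟨_, pair_good 0 hd rfl (by omega) ht h1 h2⟩

/-! ### Points where all three numbers are in the middle third -/

lemma triple_one {u v w : ℤ} (hu : 0 < u) (huv : u < v) (hvw : v < w) (hc : IsCoprime v w)
    (hs : w ≠ u + v) (h1 : v ≠ 2 * u) (h2 : w ≠ 2 * u) (h3 : w ≠ 2 * v)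
    (h158 : ¬ (u = 1 ∧ v = 5 ∧ w = 8)) (h2310 : ¬ (u = 2 ∧ v = 3 ∧ w = 10)) :
    ∃ x : ℝ, Good (u * x) ∧ Good (v * x) ∧ Good (w * x) := by
  by_cases h467 : u = 4 ∧ v = 6 ∧ w = 7
  · obtain ⟨rfl, rfl, rfl⟩ := h467
    exact ⟨_, good_of (T := 10) (D := 11) 3 (by norm_num) (by norm_num) (by norm_num),
      good_of 5 (by norm_num) (by norm_num) (by norm_num),
      good_of 6 (by norm_num) (by norm_num) (by norm_num)⟩
  obtain ⟨t, s, ht⟩ := exists_inverse_s12 hc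
  obtain ⟨N, hN⟩ : ∃ N, N = v + w := ⟨_, rfl⟩
  rw [← hN] at ht
  -- Multiplying by `v` turns congruences for `a = u t` into congruences for `u`.
  have mulv : ∀ α β : ℤ, N ∣ α * (u * t) + β → N ∣ α * u + β * v := by
    rintro α β ⟨k, hk⟩
    exact ⟨v * k - α * u * s, by linear_combination v * hk - α * u * ht⟩
  have hsmall : ∀ x k : ℤ, x = N * k → -N < x → x < 2 * N → x = 0 ∨ x = N := by
    intro x k hx g1 g2
    have hNpos : 0 < N := by omega
    have k1 : -1 < k := by nlinarith
    have k2 : k < 2 := by nlinarith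
    have : k = 0 ∨ k = 1 := by omega
    rcases this with rfl | rfl
    · left; simpa using hx
    · right; simpa using hx
  obtain ⟨j, q, q1, q2, q3, q4⟩ := exists_middle (N := N) (a := u * t) (by omega)
    (fun h => by
      obtain ⟨k, hk⟩ := mulv 1 0 (by simpa using h)
      have := hsmall _ k hk (by omega) (by omega)
      omega)
    (fun h => by
      obtain ⟨k, hk⟩ := mulv (-1) 2 (by
        have := dvd_neg.2 h
        ring_nf at this ⊢; exact this)
      have := hsmall _ k hk (by omega) (by omega)
      omega)
    (fun h => by
      obtain ⟨k, hk⟩ := mulv 1 2 (by simpa using h)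
      have := hsmall _ k hk (by omega) (by omega)
      omega)
    (fun h => by
      obtain ⟨k, hk⟩ := mulv 2 (-1) (by simpa [sub_eq_add_neg] using h)
      have := hsmall _ k hk (by omega) (by omega)
      omega)
    (fun h => by
      obtain ⟨k, hk⟩ := mulv 2 1 (by simpa using h)
      have := hsmall _ k hk (by omega) (by omega)
      omega)
    (by
      rintro ⟨h13, h | h⟩
      · have := mulv 1 (-5) (by rw [h13]; simpa [sub_eq_add_neg] using h)
        rw [h13] at this
        have : v = 2 ∨ v = 3 ∨ v = 4 ∨ v = 5 ∨ v = 6 := by omega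
        rcases this with rfl | rfl | rfl | rfl | rfl <;> omega
      · have := mulv 1 (-8) (by rw [h13]; simpa [sub_eq_add_neg] using h)
        rw [h13] at this
        have : v = 2 ∨ v = 3 ∨ v = 4 ∨ v = 5 ∨ v = 6 := by omega
        rcases this with rfl | rfl | rfl | rfl | rfl <;> omega)
  have hNpos : 0 < N := by omega
  rcases lt_or_eq_of_le q4 with q4 | q4
  · have hp := pair_good 0 (d := 1) one_pos hN hNpos ht q1 q2
    simp only [one_mul, mul_zero, add_zero] at hp
    refine ⟨_, good_of (D := N) (T := j * t) q hNpos ?_ ?_, hp⟩ <;>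
      rw [show u * (j * t) = u * t * j by ring]
    · exact q3
    · exact q4
  · -- `a j / N ≡ 2/3` is not in the half-open middle third, so `j` is replaced by `N - j`.
    have hp := pair_good (j := N - j) (-t) (d := 1) one_pos hN hNpos ht (by omega) (by omega)
    simp only [one_mul] at hp
    refine ⟨_, good_of (D := N) (-q - 1) hNpos ?_ ?_, hp⟩ <;>
      rw [show u * ((N - j) * t + N * -t) - (-q - 1) * N = N - (u * t * j - q * N) by ring] <;>
      linarith

lemma triple_two {u v' w' : ℤ} (hu : 0 < u) (huv : u < 2 * v') (hvw : v' < w')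
    (hc : IsCoprime v' w') (hodd : u % 2 = 1) (h1 : 2 * v' ≠ 2 * u) (h2 : 2 * w' ≠ 2 * u)
    (h3 : 2 * w' ≠ 2 * (2 * v')) :
    ∃ x : ℝ, Good (u * x) ∧ Good ((2 * v' : ℤ) * x) ∧ Good ((2 * w' : ℤ) * x) := by
  obtain ⟨t, s, ht⟩ := exists_inverse_s12 hc
  have hN4 := reduced_sum (by omega) hvw h3
  obtain ⟨N, hN⟩ : ∃ N, N = v' + w' := ⟨_, rfl⟩
  rw [← hN] at ht hN4
  have mulv : ∀ β : ℤ, N ∣ u * t + β → N ∣ u + β * v' := by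
    rintro β ⟨k, hk⟩
    exact ⟨v' * k - u * s, by linear_combination v' * hk - u * ht⟩
  have hsmall : ∀ x k : ℤ, x = N * k → -N < x → x < 2 * N → x = 0 ∨ x = N := by
    intro x k hx g1 g2
    have k1 : -1 < k := by nlinarith
    have k2 : k < 2 := by nlinarith
    have : k = 0 ∨ k = 1 := by omega
    rcases this with rfl | rfl
    · left; simpa using hx
    · right; simpa using hx
  obtain ⟨j, q, q1, q2, q3, q4⟩ := exists_outer (N := N) (a := u * t) hN4
    (fun h => by
      obtain ⟨k, hk⟩ := mulv (-1) (by simpa [sub_eq_add_neg] using h)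
      have := hsmall _ k hk (by omega) (by omega)
      omega)
    (fun h => by
      obtain ⟨k, hk⟩ := mulv 1 (by simpa using h)
      have := hsmall _ k hk (by omega) (by omega)
      omega)
    (by
      rintro ⟨h6, h⟩
      have := mulv (-3) (by rw [h6]; simpa [sub_eq_add_neg] using h)
      rw [h6] at this ht
      -- `v'` is `1` or `2`, and `2` is not invertible modulo `6`.
      have : v' = 1 ∨ v' = 2 := by omega
      rcases this with rfl | rfl <;> omega)
  have hNpos : 0 < N := by omega
  -- The shift by `k / 2` makes `q + u k` odd.
  obtain ⟨k, z, hz⟩ : ∃ k z : ℤ, q + u * k = 2 * z + 1 := by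
    rcases Int.emod_two_eq_zero_or_one q with h | h
    · exact ⟨1, (q + u) / 2, by omega⟩
    · exact ⟨0, q / 2, by omega⟩
  refine ⟨_, good_of (D := 2 * N) z (by omega) ?_ ?_,
    pair_good k two_pos hN hNpos ht q1 q2⟩ <;>
    rw [show u * (j * t + N * k) - z * (2 * N) = u * t * j - q * N + N by
      linear_combination N * hz] <;>
    linarith

lemma triple_three {u d v' w' : ℤ} (hd : 3 ≤ d) (hv : 0 < v') (hvw : v' < w')
    (hc : IsCoprime v' w') (hud : IsCoprime u d) (h3 : d * w' ≠ 2 * (d * v')) :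
    ∃ x : ℝ, Good (u * x) ∧ Good ((d * v' : ℤ) * x) ∧ Good ((d * w' : ℤ) * x) := by
  obtain ⟨t, s, ht⟩ := exists_inverse_s12 hc
  have hN4 := reduced_sum hv hvw h3
  obtain ⟨N, hN⟩ : ∃ N, N = v' + w' := ⟨_, rfl⟩
  rw [← hN] at ht hN4
  obtain ⟨j, q1, q2⟩ := exists_interior hN4
  obtain ⟨e, g, heg⟩ := hud
  have h3N : 0 < 3 * N := by omega
  have e1 := Int.emod_add_mul_ediv (3 * (u * (j * t)) - d * N) (3 * N)
  have e2 := Int.emod_nonneg (3 * (u * (j * t)) - d * N) h3N.ne'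
  have e3 := Int.emod_lt_of_pos (3 * (u * (j * t)) - d * N) h3N
  set Q := (3 * (u * (j * t)) - d * N) / (3 * N)
  set R := (3 * (u * (j * t)) - d * N) % (3 * N)
  have hdN : 3 * N ≤ d * N := by gcongr
  -- `u (-e Q) ≡ -Q` modulo `d`, and `-Q / d` is the shift which moves `u x` into the middle third.
  have key : u * (j * t + N * (-e * Q)) - g * Q * (d * N) = u * (j * t) - N * Q := by
    linear_combination -N * Q * heg
  refine ⟨_, good_of (D := d * N) (g * Q) (by nlinarith) ?_ ?_,
    pair_good (-e * Q) (by omega) hN (by omega) ht q1 q2⟩ <;>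
    rw [key] <;> linarith

lemma exists_triple {u v w : ℕ} (hu : 0 < u) (huv : u < v) (hvw : v < w)
    (hgcd : Nat.gcd u (Nat.gcd v w) = 1)
    (hs : w ≠ u + v) (h1 : v ≠ 2 * u) (h2 : w ≠ 2 * u) (h3 : w ≠ 2 * v)
    (h158 : ¬ (u = 1 ∧ v = 5 ∧ w = 8)) (h2310 : ¬ (u = 2 ∧ v = 3 ∧ w = 10)) :
    ∃ x : ℝ, Good (u * x) ∧ Good (v * x) ∧ Good (w * x) := by
  obtain ⟨d, v', w', hd, hv', hvw', e1, e2, hc⟩ :=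
    exists_reduced (v := (v : ℤ)) (w := (w : ℤ)) (by omega) (by omega)
  have hud : IsCoprime (u : ℤ) d := by
    rw [Int.isCoprime_iff_gcd_eq_one]
    have hdvd : d.natAbs ∣ Nat.gcd v w := by
      refine Nat.dvd_gcd ?_ ?_
      · exact Int.natAbs_dvd_natAbs.2 (Dvd.intro _ e1.symm)
      · exact Int.natAbs_dvd_natAbs.2 (Dvd.intro _ e2.symm)
    have := Nat.gcd_dvd_gcd_of_dvd_right u hdvd
    rw [hgcd, Nat.dvd_one] at this
    exact this
  suffices h : ∃ x : ℝ, Good ((u : ℤ) * x) ∧ Good ((v : ℤ) * x) ∧ Good ((w : ℤ) * x) by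
    simpa using h
  rcases (by omega : d = 1 ∨ d = 2 ∨ 3 ≤ d) with rfl | rfl | hd3
  · rw [one_mul] at e1 e2
    rw [← e1, ← e2] at hc
    exact triple_one (by omega) (by omega) (by omega) hc (by omega) (by omega) (by omega) (by omega)
      (by omega) (by omega)
  · rw [e1, e2]
    have hodd : (u : ℤ) % 2 = 1 := by
      obtain ⟨p, q, hpq⟩ := hud
      rcases Int.emod_two_eq_zero_or_one (u : ℤ) with h | h
      · obtain ⟨c, hc⟩ : ∃ c, (u : ℤ) = 2 * c := ⟨(u : ℤ) / 2, by omega⟩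
        rw [hc] at hpq
        have : 2 * (p * c + q) = 1 := by linarith
        omega
      · exact h
    exact triple_two (by omega) (by omega) hvw' hc hodd (by omega) (by omega) (by omega)
  · rw [e1, e2]
    exact triple_three hd3 hv' hvw' hc hud (by omega)

/-! ### The exceptional sets -/

lemma not_good_double {x y : ℝ} (hy : y = 2 * x) : ¬ (Good x ∧ Good y) := by
  rintro ⟨⟨p, p1, p2⟩, ⟨q, q1, q2⟩⟩
  have h1 : (2 * p : ℝ) < q + 1 := by linarith
  have h2 : (q : ℝ) < 2 * p + 1 := by linarith
  have h1' : 2 * p < q + 1 := by exact_mod_cast h1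
  have h2' : q < 2 * p + 1 := by exact_mod_cast h2
  have h : q = 2 * p := by omega
  subst h
  push_cast at q2
  linarith

lemma not_good_add {x y z : ℝ} (hz : z = x + y) : ¬ (Good x ∧ Good y ∧ Good z) := by
  rintro ⟨⟨p, p1, p2⟩, ⟨q, q1, q2⟩, ⟨r, r1, r2⟩⟩
  have h1 : (p + q : ℝ) < r + 1 / 3 + 1 / 3 := by linarith
  have h2 : (r : ℝ) < p + q + 1 := by linarith
  have h1' : p + q < r + 1 := by
    have : (p + q : ℝ) < r + 1 := by linarith
    exact_mod_cast this
  have h2' : r < p + q + 1 := by exact_mod_cast h2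
  have h : r = p + q := by omega
  subst h
  push_cast at r2
  linarith

lemma not_good_158 {x : ℝ} : ¬ (Good x ∧ Good (5 * x) ∧ Good (8 * x)) := by
  rintro ⟨⟨p, p1, p2⟩, ⟨q, q1, q2⟩, ⟨r, r1, r2⟩⟩
  have h1 : q < 5 * p + 3 := by
    have : (q : ℝ) < 5 * p + 3 := by linarith
    exact_mod_cast this
  have h2 : 5 * p + 1 < q := by
    have : (5 * p + 1 : ℝ) < q := by linarith
    exact_mod_cast this
  have h : q = 5 * p + 2 := by omega
  subst h
  push_cast at q1 q2
  have h3 : r < 8 * p + 4 := by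
    have : (r : ℝ) < 8 * p + 4 := by linarith
    exact_mod_cast this
  have h4 : 8 * p + 3 < r := by
    have : (8 * p + 3 : ℝ) < r := by linarith
    exact_mod_cast this
  omega

lemma not_good_2310 {x : ℝ} : ¬ (Good (2 * x) ∧ Good (3 * x) ∧ Good (10 * x)) := by
  rintro ⟨⟨p, p1, p2⟩, ⟨q, q1, q2⟩, ⟨r, r1, r2⟩⟩
  have h1 : r < 5 * p + 3 := by
    have : (r : ℝ) < 5 * p + 3 := by linarith
    exact_mod_cast this
  have h2 : 5 * p + 1 < r := by
    have : (5 * p + 1 : ℝ) < r := by linarith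
    exact_mod_cast this
  have h : r = 5 * p + 2 := by omega
  subst h
  push_cast at r1 r2
  have h3 : 2 * q < 3 * p + 1 := by
    have : (2 * q : ℝ) < 3 * p + 1 := by linarith
    exact_mod_cast this
  have h4 : 3 * p < 2 * q := by
    have : (3 * p : ℝ) < 2 * q := by linarith
    exact_mod_cast this
  omega

lemma f_le (y : ℝ) : f y ≤ 2/3 := by
  unfold f
  split_ifs <;> norm_num

lemma le_f (y : ℝ) : -1/3 ≤ f y := by
  unfold f
  split_ifs <;> norm_num

lemma fA_triple {u v w : ℕ} (huv : u < v) (hvw : v < w) (x : ℝ) :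
    fA {u, v, w} x = f (u * x) + f (v * x) + f (w * x) := by
  unfold fA
  rw [Finset.sum_insert (by simp; omega), Finset.sum_insert (by simp; omega),
    Finset.sum_singleton]
  ring

lemma fA_le_mA {u v w : ℕ} (huv : u < v) (hvw : v < w) (x : ℝ) :
    fA {u, v, w} x ≤ mA {u, v, w} := by
  refine le_csSup ⟨2, ?_⟩ ⟨x, rfl⟩
  rintro _ ⟨y, rfl⟩
  rw [fA_triple huv hvw]
  linarith [f_le (u * y), f_le (v * y), f_le (w * y)]

lemma mA_eq_one_iff {u v w : ℕ} (hu : 0 < u) (huv : u < v) (hvw : v < w) :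
    mA {u, v, w} = 1 ↔ ∀ x : ℝ, ¬ (Good (u * x) ∧ Good (v * x) ∧ Good (w * x)) := by
  constructor
  · rintro h x ⟨g1, g2, g3⟩
    have := fA_le_mA huv hvw x
    rw [h, fA_triple huv hvw, f_good g1, f_good g2, f_good g3] at this
    norm_num at this
  · intro h
    apply le_antisymm
    · apply csSup_le (Set.range_nonempty _)
      rintro _ ⟨x, rfl⟩
      rw [fA_triple huv hvw]
      have l1 := f_le (u * x)
      have l2 := f_le (v * x)
      have l3 := f_le (w * x)
      by_cases g1 : Good (u * x)
      · by_cases g2 : Good (v * x)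
        · have := f_not_good (fun g3 => h x ⟨g1, g2, g3⟩)
          linarith
        · have := f_not_good g2
          linarith
      · have := f_not_good g1
        linarith
    · by_cases hw : w = 2 * v
      · -- The ratio `w / v` is `2`, so the ratio `w / u` is not.
        obtain ⟨x, g1, g3⟩ := exists_pair_s12 (v := (u : ℤ)) (w := (w : ℤ)) (by omega) (by omega)
          (by omega)
        refine le_trans ?_ (fA_le_mA huv hvw x)
        rw [fA_triple huv hvw, f_good (y := u * x) (by simpa using g1), f_good (y := w * x) (by simpa using g3)]
        linarith [le_f (v * x)]
      · obtain ⟨x, g2, g3⟩ := exists_pair_s12 (v := (v : ℤ)) (w := (w : ℤ)) (by omega) (by omega)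
          (by omega)
        refine le_trans ?_ (fA_le_mA huv hvw x)
        rw [fA_triple huv hvw, f_good (y := v * x) (by simpa using g2), f_good (y := w * x) (by simpa using g3)]
        linarith [le_f (u * x)]

lemma triple_eq {u v w a b c : ℕ} (huv : u < v) (hvw : v < w) (hab : a < b) (hbc : b < c)
    (h : ({u, v, w} : Finset ℕ) = {a, b, c}) : u = a ∧ v = b ∧ w = c := by
  simp only [Finset.ext_iff, Finset.mem_insert, Finset.mem_singleton] at h
  have := (h u).1 (by simp)
  have := (h v).1 (by simp)
  have := (h w).1 (by simp)
  omega

theorem size_three_classification (u v w : ℕ) (hu : 0 < u) (huv : u < v) (hvw : v < w)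
    (hgcd : Nat.gcd u (Nat.gcd v w) = 1) :
    mA ({u, v, w} : Finset ℕ) = 1 ↔
      (w = u + v ∨
        (∃ a ∈ ({u, v, w} : Finset ℕ), 2 * a ∈ ({u, v, w} : Finset ℕ)) ∨
        ({u, v, w} : Finset ℕ) = ({1, 5, 8} : Finset ℕ) ∨
        ({u, v, w} : Finset ℕ) = ({2, 3, 10} : Finset ℕ)) := by
  rw [mA_eq_one_iff hu huv hvw]
  constructor
  · intro h
    by_contra! hex
    obtain ⟨hs, hd, h158, h2310⟩ := hex
    simp only [Finset.mem_insert, Finset.mem_singleton] at hd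
    have d1 := hd u (by simp)
    have d2 := hd v (by simp)
    obtain ⟨x, hx⟩ := exists_triple hu huv hvw hgcd hs (by omega) (by omega) (by omega)
      (by rintro ⟨rfl, rfl, rfl⟩; exact h158 rfl) (by rintro ⟨rfl, rfl, rfl⟩; exact h2310 rfl)
    exact h x hx
  · rintro (rfl | ⟨a, ha, ha2⟩ | h | h) x ⟨g1, g2, g3⟩
    · exact not_good_add (by push_cast; ring) ⟨g1, g2, g3⟩
    · have good_mem : ∀ b ∈ ({u, v, w} : Finset ℕ), Good (b * x) := by
        simp only [Finset.mem_insert, Finset.mem_singleton]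
        rintro b (rfl | rfl | rfl) <;> assumption
      exact not_good_double (by push_cast; ring) ⟨good_mem a ha, good_mem _ ha2⟩
    · obtain ⟨rfl, rfl, rfl⟩ := triple_eq huv hvw (by norm_num) (by norm_num) h
      exact not_good_158 (x := x) ⟨by simpa using g1, by simpa using g2, by simpa using g3⟩
    · obtain ⟨rfl, rfl, rfl⟩ := triple_eq huv hvw (by norm_num) (by norm_num) h
      exact not_good_2310 (x := x) ⟨by simpa using g1, by simpa using g2, by simpa using g3⟩
end
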